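/- (Pointwise domination by Hardy–Littlewood maximal functions.) Let n ≥ 5. There exists a constant C = C(n) such that for all functions f₁,…,f_n : ℤ → ℂ and every y ∈ ℤ, A_*[f₁,…,f_n](y) ≤ C ∏_{i=1}^n ( sup_{N ≥ 1} N^{−1} Σ_{x ∈ [−N,N] ∩ ℤ} |f_i(y − x)|² )^{1/2}, where the supremum is over integers N ≥ 1. -/

import Mathlib

open scoped BigOperators ENNReal NNReal
open MeasureTheory Finset

noncomputable section

/-- `sphereCount n lam` is the number of lattice points `x ∈ ℤ^n` with
`x₁² + ⋯ + x_n² = lam`. -/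
def sphereCount (n lam : ℕ) : ℕ :=
  {x : Fin n → ℤ | ∑ i, (x i) ^ 2 = (lam : ℤ)}.ncard

/-- The multilinear spherical average
`A_lam[f₁,…,f_n](y) = (1/r_n(lam)) ∑_{|x|² = lam} f₁(y-x₁)⋯f_n(y-x_n)`. -/
def mulAvg (n lam : ℕ) (f : Fin n → ℤ → ℂ) (y : ℤ) : ℂ :=
  (sphereCount n lam : ℂ)⁻¹ *
    ∑ᶠ x ∈ {x : Fin n → ℤ | ∑ i, (x i) ^ 2 = (lam : ℤ)}, ∏ i, f i (y - x i)

/-- The maximal function `A_*[f₁,…,f_n](y) = sup_{lam ≥ 1} |A_lam[f₁,…,f_n](y)|`. -/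
def maxFn (n : ℕ) (f : Fin n → ℤ → ℂ) (y : ℤ) : ℝ≥0∞ :=
  ⨆ (lam : ℕ) (_ : 1 ≤ lam), (‖mulAvg n lam f y‖₊ : ℝ≥0∞)

/-- The `ℓ^p(ℤ)` norm of a complex-valued function, valued in `ℝ≥0∞`. -/
def lpNorm (p : ℝ) (g : ℤ → ℂ) : ℝ≥0∞ :=
  (∑' x : ℤ, (‖g x‖₊ : ℝ≥0∞) ^ p) ^ (1 / p)

/-- The `ℓ^q(ℤ)` norm of an `ℝ≥0∞`-valued function. -/
def lqNormE (q : ℝ) (g : ℤ → ℝ≥0∞) : ℝ≥0∞ :=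
  (∑' x : ℤ, g x ^ q) ^ (1 / q)

/-!
Let `F i` be the quadratic exponential sum `∑ f i (y - x) e(x²θ)` over `|x| ≤ N`, with `N`
comparable to `√lam`. By the circle method on the grid `j / (20N²)`, the sum of `∏ i, f i (y - x i)`
over the sphere is at most `N⁻²` times the sum of `∏ i, |F i|` over the grid. As the sphere contains
at least `c N ^ (n - 2)` lattice points, what remains is to bound the `n`-th moment of `F i` over
the grid by `O(N ^ n)` when the sum of `|f i (y - x)|²` is at most `N`; by `|F i| ≤ 4N` the fifth
moment suffices.

It follows from a level set estimate without any loss in `N`: at most `O(γ ^ (-9))` grid points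
satisfy `|F i| ≥ γ²N`. If `γ ^ 8 * N` is bounded, the fourth moment gives this in spite of the loss
in the divisor bound. Otherwise duality bounds a large level set `U` by a sum of Weyl sums over the
differences of its points. Weyl sums are large only on major arcs. A difference on a major arc of
denominator `q ≤ E` is detected by short geometric sums in its multiples by `q`; summed over pairs
these become values of the exponential sum over `U`, weighted by the number of divisors up to `E`,
whose moments lose only a small power of `E`, not of `N`.

The count of lattice points comes from Jacobi's formula, in Zagier's elementary way: `4u` is a sum
of four odd squares in `16 σ(u)` ways when `u` is odd.
-/

namespace SphericalAverage

/-! ### Four odd squares and the divisor sum -/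

section FourOddSquares

/-- Zagier's set of triples `(k, d, e)` with `d, e > 0` and `k² + 4de = w`. -/
def zagierTriples (w : ℤ) : Finset (ℤ × ℤ × ℤ) :=
  {x ∈ Icc (-w) w ×ˢ Icc 1 w ×ˢ Icc 1 w | x.1 ^ 2 + 4 * x.2.1 * x.2.2 = w}

/-- A weight on Zagier's triples which Zagier's involution changes by a sign. -/
def zagierWeight (x : ℤ × ℤ × ℤ) : ℤ :=
  (x.2.1 + x.2.2) * (x.2.2 + x.1) * (x.2.1 - x.1)

variable {w k d e : ℤ}

lemma mem_zagierTriples :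
    (k, d, e) ∈ zagierTriples w ↔ 0 < d ∧ 0 < e ∧ k ^ 2 + 4 * d * e = w := by
  simp only [zagierTriples, mem_filter, mem_product, mem_Icc]
  constructor
  · rintro ⟨⟨-, ⟨hd, -⟩, he, -⟩, h⟩
    exact ⟨by lia, by lia, h⟩
  · rintro ⟨hd, he, h⟩
    have hde : 0 < d * e := mul_pos hd he
    have : k ^ 2 ≤ w := by nlinarith
    refine ⟨⟨⟨?_, ?_⟩, ⟨by lia, ?_⟩, by lia, ?_⟩, h⟩ <;>
      nlinarith [sq_nonneg (k - 1), sq_nonneg (k + 1)]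

lemma sum_zagierWeight_filter_lt (w : ℤ) :
    ∑ x ∈ zagierTriples w with x.2.1 < x.2.2 + x.1, zagierWeight x = 0 := by
  refine sum_involution (fun x _ ↦ (2 * x.2.1 - x.1, x.2.1, x.2.2 + x.1 - x.2.1)) ?_ ?_ ?_ ?_
  · rintro ⟨k, d, e⟩ -
    simp only [zagierWeight]
    ring
  · rintro ⟨k, d, e⟩ - hweight hfixed
    simp only [Prod.mk.injEq] at hfixed
    obtain rfl : d = k := by lia
    simp [zagierWeight] at hweight
  · rintro ⟨k, d, e⟩ h
    simp only [mem_filter, mem_zagierTriples] at h ⊢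
    obtain ⟨⟨hd, he, h⟩, hlt⟩ := h
    exact ⟨⟨hd, by lia, by rw [← h]; ring⟩, by lia⟩
  · rintro ⟨k, d, e⟩ -
    simp only [Prod.mk.injEq]
    exact ⟨by ring, trivial, by ring⟩

/-- `(k, d, e) ↦ (-k, e, d)` exchanges the two regions off the line `d = e + k`, on which
`w = (d + e)²`. -/
lemma sum_zagierWeight_filter_not_lt (hw : ¬ IsSquare w) :
    ∑ x ∈ zagierTriples w with ¬ x.2.1 < x.2.2 + x.1, zagierWeight x = 0 := by
  rw [← sum_zagierWeight_filter_lt w]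
  refine sum_nbij' (fun x ↦ (-x.1, x.2.2, x.2.1)) (fun x ↦ (-x.1, x.2.2, x.2.1)) ?_ ?_ ?_ ?_ ?_
  · rintro ⟨k, d, e⟩ h
    simp only [mem_filter, mem_zagierTriples] at h ⊢
    obtain ⟨⟨hd, he, h⟩, hle⟩ := h
    have hne : d ≠ e + k := by
      rintro rfl
      exact hw ⟨e + k + e, by rw [← h]; ring⟩
    exact ⟨⟨he, hd, by rw [← h]; ring⟩, by lia⟩
  · rintro ⟨k, d, e⟩ h
    simp only [mem_filter, mem_zagierTriples] at h ⊢
    obtain ⟨⟨hd, he, h⟩, hlt⟩ := h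
    exact ⟨⟨he, hd, by rw [← h]; ring⟩, by lia⟩
  · simp
  · simp
  · rintro ⟨k, d, e⟩ -
    simp only [zagierWeight]
    ring

lemma sum_zagierWeight (hw : ¬ IsSquare w) : ∑ x ∈ zagierTriples w, zagierWeight x = 0 := by
  rw [← sum_filter_add_sum_filter_not _ (fun x ↦ x.2.1 < x.2.2 + x.1),
    sum_zagierWeight_filter_lt, sum_zagierWeight_filter_not_lt hw, add_zero]

lemma sum_zagierTriples_neg {A : Type*} [AddCommMonoid A] (w : ℤ) (g : ℤ × ℤ × ℤ → A) :
    ∑ x ∈ zagierTriples w, g (-x.1, x.2.1, x.2.2) = ∑ x ∈ zagierTriples w, g x := by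
  refine sum_nbij' (fun x ↦ (-x.1, x.2.1, x.2.2)) (fun x ↦ (-x.1, x.2.1, x.2.2)) ?_ ?_ ?_ ?_ ?_
  all_goals rintro ⟨k, d, e⟩ h; simp_all [mem_zagierTriples]

lemma sum_zagierTriples_swap {A : Type*} [AddCommMonoid A] (w : ℤ) (g : ℤ × ℤ × ℤ → A) :
    ∑ x ∈ zagierTriples w, g (x.1, x.2.2, x.2.1) = ∑ x ∈ zagierTriples w, g x := by
  refine sum_nbij' (fun x ↦ (x.1, x.2.2, x.2.1)) (fun x ↦ (x.1, x.2.2, x.2.1)) ?_ ?_ ?_ ?_ ?_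
  all_goals rintro ⟨k, d, e⟩ h; simp_all [mem_zagierTriples, mul_right_comm]

/-- Symmetrising the weight in `k ↦ -k` leaves `d (de - k²) + e (de - k²)`, up to a factor `2`. -/
lemma sum_zagierTriples_cubic (hw : ¬ IsSquare w) :
    ∑ x ∈ zagierTriples w, x.2.1 * (x.2.1 * x.2.2 - x.1 ^ 2) = 0 := by
  have hneg := sum_zagierTriples_neg w zagierWeight
  have hswap := sum_zagierTriples_swap w fun x ↦ x.2.1 * (x.2.1 * x.2.2 - x.1 ^ 2)
  have hsym : ∑ x ∈ zagierTriples w, zagierWeight x +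
        ∑ x ∈ zagierTriples w, zagierWeight (-x.1, x.2.1, x.2.2) =
      2 * (∑ x ∈ zagierTriples w, x.2.1 * (x.2.1 * x.2.2 - x.1 ^ 2) +
        ∑ x ∈ zagierTriples w, x.2.2 * (x.2.2 * x.2.1 - x.1 ^ 2)) := by
    rw [← sum_add_distrib, ← sum_add_distrib, mul_sum]
    refine sum_congr rfl fun x _ ↦ ?_
    simp only [zagierWeight]
    ring
  rw [hneg, sum_zagierWeight hw] at hsym
  lia

lemma sum_zagierTriples_cubic_pos (hw : ¬ IsSquare w) (hw4 : ¬ 4 ∣ w) :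
    ∑ x ∈ zagierTriples w with 0 < x.1, x.2.1 * (x.2.1 * x.2.2 - x.1 ^ 2) = 0 := by
  have hreflect : ∑ x ∈ zagierTriples w with ¬ 0 < x.1, x.2.1 * (x.2.1 * x.2.2 - x.1 ^ 2) =
      ∑ x ∈ zagierTriples w with 0 < x.1, x.2.1 * (x.2.1 * x.2.2 - x.1 ^ 2) := by
    refine sum_nbij' (fun x ↦ (-x.1, x.2.1, x.2.2)) (fun x ↦ (-x.1, x.2.1, x.2.2)) ?_ ?_ ?_ ?_ ?_
    · rintro ⟨k, d, e⟩ h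
      simp only [mem_filter, mem_zagierTriples] at h ⊢
      obtain ⟨⟨hd, he, h⟩, hk⟩ := h
      have hk0 : k ≠ 0 := by
        rintro rfl
        exact hw4 ⟨d * e, by rw [← h]; ring⟩
      exact ⟨⟨hd, he, by rw [← h]; ring⟩, by lia⟩
    · rintro ⟨k, d, e⟩ h
      simp only [mem_filter, mem_zagierTriples] at h ⊢
      obtain ⟨⟨hd, he, h⟩, hk⟩ := h
      exact ⟨⟨hd, he, by rw [← h]; ring⟩, by lia⟩
    all_goals simp
  have htotal := sum_zagierTriples_cubic hw
  rw [← sum_filter_add_sum_filter_not _ (fun x ↦ 0 < x.1), hreflect] at htotal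
  lia

end FourOddSquares

section OddSquareReps

/-- The odd natural numbers `k` with `k² ≤ w`. -/
def oddSqLE (w : ℕ) : Finset ℕ := {k ∈ range (w + 1) | Odd k ∧ k ^ 2 ≤ w}

/-- The representations of `w` as an ordered sum of `n` squares of odd natural numbers. -/
def oddSquareReps (n w : ℕ) : Finset (Fin n → ℕ) :=
  {x ∈ Fintype.piFinset fun _ ↦ oddSqLE w | ∑ i, x i ^ 2 = w}

variable {n w k : ℕ}

lemma mem_oddSqLE : k ∈ oddSqLE w ↔ Odd k ∧ k ^ 2 ≤ w := by
  simp only [oddSqLE, mem_filter, mem_range, and_iff_right_iff_imp]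
  rintro ⟨-, h⟩
  nlinarith

lemma mem_oddSquareReps {x : Fin n → ℕ} :
    x ∈ oddSquareReps n w ↔ (∀ i, Odd (x i)) ∧ ∑ i, x i ^ 2 = w := by
  simp only [oddSquareReps, mem_filter, Fintype.mem_piFinset, mem_oddSqLE]
  constructor
  · exact fun h ↦ ⟨fun i ↦ (h.1 i).1, h.2⟩
  · rintro ⟨hodd, rfl⟩
    exact ⟨fun i ↦ ⟨hodd i, single_le_sum (f := fun i ↦ x i ^ 2) (fun _ _ ↦ Nat.zero_le _)
      (mem_univ i)⟩, rfl⟩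

lemma sq_mod_eight_of_odd (hk : Odd k) : k ^ 2 % 8 = 1 := by
  obtain ⟨m, rfl⟩ := hk
  obtain ⟨r, hr⟩ := Nat.even_mul_succ_self m
  have : (2 * m + 1) ^ 2 = 8 * r + 1 := by linarith
  lia

lemma odd_of_sq_add_four_mul {d e : ℕ} (hw : Odd w) (h : k ^ 2 + 4 * d * e = w) : Odd k := by
  have : Odd (k ^ 2 + 2 * (2 * (d * e))) := by convert hw using 1; rw [← h]; ring
  simpa [Nat.odd_add, Nat.odd_pow_iff, parity_simps] using this

lemma sigma_one_eq_sum_divisorsAntidiagonal (m : ℕ) :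
    (ArithmeticFunction.sigma 1 m : ℤ) = ∑ p ∈ m.divisorsAntidiagonal, (p.1 : ℤ) := by
  rw [ArithmeticFunction.sigma_one_apply, Nat.sum_divisorsAntidiagonal (fun d _ ↦ (d : ℤ))]
  simp

lemma mem_oddSqLE_and_mem_divisorsAntidiagonal {d e : ℕ} (hw : w % 4 = 1) :
    k ∈ oddSqLE w ∧ (d, e) ∈ ((w - k ^ 2) / 4).divisorsAntidiagonal ↔
      0 < k ∧ 0 < d ∧ 0 < e ∧ k ^ 2 + 4 * d * e = w := by
  rw [mem_oddSqLE, Nat.mem_divisorsAntidiagonal, mul_assoc]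
  constructor
  · rintro ⟨⟨hodd, _⟩, hde, hne⟩
    have := sq_mod_eight_of_odd hodd
    obtain ⟨hd, he⟩ : d ≠ 0 ∧ e ≠ 0 := mul_ne_zero_iff.1 (hde ▸ hne)
    exact ⟨hodd.pos, hd.pos, he.pos, by lia⟩
  · rintro ⟨-, hd, he, h⟩
    have := Nat.mul_pos hd he
    have hodd : Odd k := odd_of_sq_add_four_mul (w := w) (by grind) (by rw [← h, mul_assoc])
    exact ⟨⟨hodd, by lia⟩, by lia, by lia⟩

/-- The pairs `(k, (d, e))` with `de = (w - k²) / 4` are exactly Zagier's triples with `k > 0`. -/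
lemma sum_oddSqLE_mul_sigma_one (hw : w % 4 = 1) (hsq : ¬ IsSquare w) :
    ∑ k ∈ oddSqLE w, ((w : ℤ) - 5 * k ^ 2) * ArithmeticFunction.sigma 1 ((w - k ^ 2) / 4) = 0 := by
  have hzagier := sum_zagierTriples_cubic_pos (w := w) (by exact_mod_cast hsq) (by lia)
  rw [← mul_zero 4, ← hzagier, mul_sum]
  have hmem {k d e : ℕ} := mem_oddSqLE_and_mem_divisorsAntidiagonal (k := k) (d := d) (e := e) hw
  simp_rw [sigma_one_eq_sum_divisorsAntidiagonal, mul_sum]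
  rw [sum_sigma']
  refine sum_nbij (fun x ↦ ((x.1 : ℤ), (x.2.1 : ℤ), (x.2.2 : ℤ))) ?_ ?_ ?_ ?_
  · rintro ⟨k, d, e⟩ h
    rw [mem_sigma, hmem] at h
    obtain ⟨hk, hd, he, h⟩ := h
    rw [mem_filter, mem_zagierTriples]
    exact ⟨⟨by lia, by lia, by exact_mod_cast h⟩, by lia⟩
  · rintro ⟨k, d, e⟩ - ⟨k', d', e'⟩ - h
    simp_all
  · rintro ⟨k, d, e⟩ h
    simp only [coe_filter, mem_zagierTriples, Set.mem_ofPred_eq] at h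
    obtain ⟨⟨hd, he, h⟩, hk⟩ := h
    lift k to ℕ using hk.le
    lift d to ℕ using hd.le
    lift e to ℕ using he.le
    exact ⟨⟨k, d, e⟩, mem_sigma.2 (hmem.2 ⟨by lia, by lia, by lia, by exact_mod_cast h⟩), rfl⟩
  · rintro ⟨k, d, e⟩ h
    obtain ⟨-, -, -, hw⟩ := hmem.1 (mem_sigma.1 h)
    simp only [← hw]
    push_cast
    ring

lemma sum_oddSquareReps_sq_eq (n w : ℕ) (i j : Fin n) :
    ∑ x ∈ oddSquareReps n w, (x i : ℤ) ^ 2 = ∑ x ∈ oddSquareReps n w, (x j : ℤ) ^ 2 := by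
  refine sum_equiv ((Equiv.swap i j).arrowCongr (Equiv.refl ℕ)) (fun x ↦ ?_) (by simp)
  have hodd : (∀ l, Odd (x l)) ↔ ∀ l, Odd (x (Equiv.swap i j l)) :=
    (Equiv.swap i j).forall_congr_right.symm
  have hsum : ∑ l, x (Equiv.swap i j l) ^ 2 = ∑ l, x l ^ 2 :=
    Equiv.sum_comp (Equiv.swap i j) (fun l ↦ x l ^ 2)
  simp [mem_oddSquareReps, hodd, hsum]

lemma sum_oddSquareReps_zero (n w : ℕ) :
    ∑ x ∈ oddSquareReps (n + 1) w, ((w : ℤ) - (n + 1) * x 0 ^ 2) = 0 := by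
  have htotal : ∑ _x ∈ oddSquareReps (n + 1) w, (w : ℤ) =
      ∑ i, ∑ x ∈ oddSquareReps (n + 1) w, (x i : ℤ) ^ 2 := by
    rw [sum_comm]
    refine sum_congr rfl fun x hx ↦ ?_
    exact_mod_cast (mem_oddSquareReps.1 hx).2.symm
  rw [sum_sub_distrib, htotal, ← mul_sum,
    sum_congr rfl fun i _ ↦ sum_oddSquareReps_sq_eq (n + 1) w i 0]
  simp

lemma sum_oddSquareReps_succ (n w : ℕ) (g : ℕ → ℤ) :
    ∑ x ∈ oddSquareReps (n + 1) w, g (x 0) =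
      ∑ k ∈ oddSqLE w, g k * #(oddSquareReps n (w - k ^ 2)) := by
  have hcard (k : ℕ) : g k * #(oddSquareReps n (w - k ^ 2)) =
      ∑ _y ∈ oddSquareReps n (w - k ^ 2), g k := by
    rw [sum_const, nsmul_eq_mul, mul_comm]
  simp_rw [hcard]
  rw [sum_sigma']
  refine sum_nbij' (fun x ↦ ⟨x 0, Fin.tail x⟩) (fun p ↦ Fin.cons p.1 p.2) ?_ ?_ ?_ ?_ ?_
  · intro x hx
    rw [mem_oddSquareReps, Fin.sum_univ_succ] at hx
    simp only [mem_sigma, mem_oddSqLE, mem_oddSquareReps, Fin.tail]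
    exact ⟨⟨hx.1 0, by lia⟩, fun i ↦ hx.1 i.succ, by lia⟩
  · rintro ⟨k, y⟩ h
    simp only [mem_sigma, mem_oddSqLE, mem_oddSquareReps] at h
    simp only [mem_oddSquareReps, Fin.forall_fin_succ, Fin.sum_univ_succ, Fin.cons_zero,
      Fin.cons_succ]
    exact ⟨⟨h.1.1, h.2.1⟩, by lia⟩
  all_goals simp

/-- Both sides satisfy the recursion `∑ₖ (w - 5k²) a(w - k²) = 0` over odd `k`, where `w = 4u + 1`;
it determines `a(4u)` from smaller values because `w ≠ 5`. -/
lemma card_oddSquareReps_four {u : ℕ} (hu : Odd u) :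
    #(oddSquareReps 4 (4 * u)) = ArithmeticFunction.sigma 1 u := by
  induction u using Nat.strong_induction_on with
  | _ u ih =>
  rcases eq_or_ne u 1 with rfl | hu1
  · decide
  have hu2 : u % 2 = 1 := Nat.odd_iff.1 hu
  set w := 4 * u + 1 with hw
  have hsq : ¬ IsSquare w := by
    rintro ⟨r, hr⟩
    have hr' : w = r ^ 2 := by rw [hr, sq]
    have := sq_mod_eight_of_odd (k := r) (by rw [← Nat.odd_pow_iff two_ne_zero, ← hr', hw]; grind)
    lia
  have hreps := sum_oddSquareReps_zero 4 w
  rw [sum_oddSquareReps_succ 4 w fun k ↦ (w : ℤ) - ((4 : ℕ) + 1) * k ^ 2] at hreps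
  have hdiff := congrArg₂ (· - ·) hreps (sum_oddSqLE_mul_sigma_one (by lia) hsq)
  simp only [← sum_sub_distrib, sub_zero] at hdiff
  rw [sum_eq_single_of_mem 1 (by simp [mem_oddSqLE, hw])] at hdiff
  · have hw5 : (w : ℤ) - 5 ≠ 0 := by lia
    have h4u : w - 1 ^ 2 = 4 * u := by lia
    rw [h4u, Nat.mul_div_cancel_left u (by norm_num)] at hdiff
    have : ((w : ℤ) - 5) * (#(oddSquareReps 4 (4 * u)) - ArithmeticFunction.sigma 1 u) = 0 := by
      rw [← hdiff]
      push_cast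
      ring
    have := (mul_eq_zero.1 this).resolve_left hw5
    lia
  · intro k hk hk1
    rw [mem_oddSqLE] at hk
    have hmod := sq_mod_eight_of_odd hk.1
    have hk2 : 1 < k ^ 2 := Nat.one_lt_pow two_ne_zero (by have := hk.1.pos; lia)
    have : k ^ 2 ≠ w := fun h ↦ hsq ⟨k, by rw [← h, sq]⟩
    have h4 : w - k ^ 2 = 4 * ((w - k ^ 2) / 4) := by lia
    have hih := ih ((w - k ^ 2) / 4) (by lia) (Nat.odd_iff.2 (by lia))
    rw [← h4] at hih
    rw [hih]
    push_cast
    ring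

end OddSquareReps

/-! ### Lower bounds for the number of lattice points on a sphere -/

section SphereCount

lemma finite_setOf_sum_sq_eq (n : ℕ) (m : ℤ) :
    {x : Fin n → ℤ | ∑ i, x i ^ 2 = m}.Finite := by
  refine (Set.finite_Icc (fun _ ↦ -m) (fun _ ↦ m)).subset fun x hx ↦ ?_
  have hle (i : Fin n) : x i ^ 2 ≤ m :=
    hx ▸ single_le_sum (f := fun i ↦ x i ^ 2) (fun i _ ↦ sq_nonneg _) (mem_univ i)
  exact ⟨fun i ↦ neg_le.1 ((Int.le_self_sq _).trans (neg_sq (x i) ▸ hle i)),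
    fun i ↦ (Int.le_self_sq _).trans (hle i)⟩

/-- The lattice points of the sphere `∑ xᵢ² = m`, as a finite set. -/
def spherePoints (n : ℕ) (m : ℤ) : Finset (Fin n → ℤ) := (finite_setOf_sum_sq_eq n m).toFinset

variable {n lam : ℕ}

lemma mem_spherePoints {m : ℤ} {x : Fin n → ℤ} : x ∈ spherePoints n m ↔ ∑ i, x i ^ 2 = m := by
  simp [spherePoints]

lemma sphereCount_eq_card (n lam : ℕ) : sphereCount n lam = #(spherePoints n lam) :=
  Set.ncard_eq_toFinset_card _ (finite_setOf_sum_sq_eq n lam)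

/-- One quarter of the image of `(s, b, c, d)` under a Hadamard matrix. -/
def hadamardQuarter (s b c d : ℤ) : Fin 4 → ℤ :=
  ![(s + b + c + d) / 4, (s + b - c - d) / 4, (s - b + c - d) / 4, (s - b - c + d) / 4]

/-- The sign is chosen so that `signedHead a b c d + b + c + d` is divisible by `4` when
`a, b, c, d` are odd. -/
def signedHead (a b c d : ℕ) : ℤ := if ((a : ℤ) + b + c + d) % 4 = 0 then a else -a

lemma signedHead_eq_or_neg (a b c d : ℕ) : signedHead a b c d = a ∨ signedHead a b c d = -a := by
  unfold signedHead
  split_ifs <;> simp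

lemma four_mul_hadamardQuarter {s b c d : ℤ} (hb : Odd b) (hc : Odd c) (hd : Odd d)
    (h : 4 ∣ s + b + c + d) :
    4 * hadamardQuarter s b c d 0 = s + b + c + d ∧ 4 * hadamardQuarter s b c d 1 = s + b - c - d ∧
    4 * hadamardQuarter s b c d 2 = s - b + c - d ∧
      4 * hadamardQuarter s b c d 3 = s - b - c + d := by
  obtain ⟨b, rfl⟩ := hb
  obtain ⟨c, rfl⟩ := hc
  obtain ⟨d, rfl⟩ := hd
  simp only [hadamardQuarter, Matrix.cons_val]
  exact ⟨by lia, by lia, by lia, by lia⟩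

lemma four_dvd_signedHead_add {a b c d : ℕ} (ha : Odd a) (hb : Odd b) (hc : Odd c) (hd : Odd d) :
    (4 : ℤ) ∣ signedHead a b c d + b + c + d := by
  obtain ⟨a, rfl⟩ := ha
  obtain ⟨b, rfl⟩ := hb
  obtain ⟨c, rfl⟩ := hc
  obtain ⟨d, rfl⟩ := hd
  unfold signedHead
  split_ifs with h
  · exact Int.dvd_of_emod_eq_zero h
  · push_cast at h ⊢
    lia

/-- A Hadamard matrix carries representations of `4u` by odd squares injectively to
representations of `u`. -/
lemma le_sphereCount_four {u : ℕ} (hu : Odd u) : u ≤ sphereCount 4 u := by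
  have hcard : u ≤ #(oddSquareReps 4 (4 * u)) := by
    rw [card_oddSquareReps_four hu, ArithmeticFunction.sigma_one_apply]
    exact single_le_sum (f := fun d ↦ d) (fun _ _ ↦ Nat.zero_le _)
      (Nat.mem_divisors_self u hu.pos.ne')
  have hadamard {x : Fin 4 → ℕ} (hodd : ∀ i, Odd (x i)) :=
    four_mul_hadamardQuarter (s := signedHead (x 0) (x 1) (x 2) (x 3)) ((hodd 1).natCast)
      ((hodd 2).natCast) ((hodd 3).natCast)
      (four_dvd_signedHead_add (hodd 0) (hodd 1) (hodd 2) (hodd 3))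
  rw [sphereCount_eq_card]
  refine hcard.trans (card_le_card_of_injOn
    (fun x ↦ hadamardQuarter (signedHead (x 0) (x 1) (x 2) (x 3)) (x 1) (x 2) (x 3)) ?_ ?_)
  · intro x hx
    obtain ⟨hodd, hsum⟩ := mem_oddSquareReps.1 hx
    rw [Fin.sum_univ_four] at hsum
    rw [mem_coe, mem_spherePoints, Fin.sum_univ_four]
    obtain ⟨h0, h1, h2, h3⟩ := hadamard hodd
    have hhead := sq_eq_sq_iff_eq_or_eq_neg.2 (signedHead_eq_or_neg (x 0) (x 1) (x 2) (x 3))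
    set s := signedHead (x 0) (x 1) (x 2) (x 3)
    set q := hadamardQuarter s (x 1) (x 2) (x 3)
    have hsum' : (x 0 : ℤ) ^ 2 + x 1 ^ 2 + x 2 ^ 2 + x 3 ^ 2 = 4 * u := by exact_mod_cast hsum
    have hnorm : (4 * q 0) ^ 2 + (4 * q 1) ^ 2 + (4 * q 2) ^ 2 + (4 * q 3) ^ 2 =
        4 * (s ^ 2 + x 1 ^ 2 + x 2 ^ 2 + x 3 ^ 2) := by
      rw [h0, h1, h2, h3]
      ring
    rw [hhead, hsum'] at hnorm
    change q 0 ^ 2 + q 1 ^ 2 + q 2 ^ 2 + q 3 ^ 2 = u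
    linarith
  · intro x hx y hy hxy
    have hxodd := (mem_oddSquareReps.1 hx).1
    have hyodd := (mem_oddSquareReps.1 hy).1
    obtain ⟨hx0, hx1, hx2, hx3⟩ := hadamard hxodd
    obtain ⟨hy0, hy1, hy2, hy3⟩ := hadamard hyodd
    simp only at hxy
    rw [hxy] at hx0 hx1 hx2 hx3
    have hxhead := signedHead_eq_or_neg (x 0) (x 1) (x 2) (x 3)
    have hyhead := signedHead_eq_or_neg (y 0) (y 1) (y 2) (y 3)
    funext i
    fin_cases i <;> simp only [Fin.zero_eta, Fin.mk_one, Fin.reduceFinMk] <;> lia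

lemma sum_sphereCount_le {S : Finset ℕ} (hS : ∀ x ∈ S, x ^ 2 ≤ lam) :
    ∑ x ∈ S, sphereCount n (lam - x ^ 2) ≤ sphereCount (n + 1) lam := by
  simp_rw [sphereCount_eq_card]
  rw [← card_sigma]
  refine card_le_card_of_injOn (fun p ↦ (Fin.cons (p.1 : ℤ) p.2 : Fin (n + 1) → ℤ)) ?_ ?_
  · rintro ⟨x, v⟩ h
    simp only [coe_sigma, Set.mem_sigma_iff, mem_coe, mem_spherePoints] at h ⊢
    rw [Fin.sum_univ_succ]
    simp only [Fin.cons_zero, Fin.cons_succ, h.2]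
    push_cast [hS x h.1]
    ring
  · rintro ⟨x, v⟩ - ⟨x', v'⟩ - h
    obtain ⟨hx, rfl⟩ := Fin.cons_inj.1 h
    obtain rfl : x = x' := by exact_mod_cast hx
    rfl

lemma card_mul_le_sphereCount_succ {S : Finset ℕ} {b : ℝ} (hS : ∀ x ∈ S, x ^ 2 ≤ lam)
    (hb : ∀ x ∈ S, b ≤ sphereCount n (lam - x ^ 2)) : #S * b ≤ sphereCount (n + 1) lam := by
  calc #S * b = ∑ _x ∈ S, b := by rw [sum_const, nsmul_eq_mul]
    _ ≤ ∑ x ∈ S, (sphereCount n (lam - x ^ 2) : ℝ) := sum_le_sum hb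
    _ ≤ sphereCount (n + 1) lam := by exact_mod_cast sum_sphereCount_le hS

lemma sphereCount_pos (hn : 4 ≤ n) (lam : ℕ) : 0 < sphereCount n lam := by
  induction n, hn using Nat.le_induction with
  | base =>
    obtain ⟨a, b, c, d, h⟩ := Nat.sum_four_squares lam
    rw [sphereCount_eq_card, card_pos]
    refine ⟨![a, b, c, d], mem_spherePoints.2 ?_⟩
    simp only [Fin.sum_univ_four, Matrix.cons_val]
    exact_mod_cast h
  | succ n _ ih =>
    have := sum_sphereCount_le (n := n) (lam := lam) (S := {0}) (by simp)
    simp only [sum_singleton, ne_eq, OfNat.ofNat_ne_zero, not_false_eq_true, zero_pow,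
      tsub_zero] at this
    exact ih.trans_le this

lemma natCast_sub_sq_ge {x : ℕ} (hx : (x : ℝ) ≤ √lam / 2) :
    x ^ 2 ≤ lam ∧ (3 / 4 : ℝ) * lam ≤ (lam - x ^ 2 : ℕ) := by
  have hsq : (x : ℝ) ^ 2 ≤ (lam : ℝ) / 4 := by
    calc (x : ℝ) ^ 2 ≤ (√(lam : ℝ) / 2) ^ 2 := by gcongr
      _ = (lam : ℝ) / 4 := by rw [div_pow, Real.sq_sqrt (by positivity)]; norm_num
  have hle : x ^ 2 ≤ lam := by
    have : (x : ℝ) ^ 2 ≤ lam := hsq.trans (div_le_self (by positivity) (by norm_num))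
    exact_mod_cast this
  refine ⟨hle, ?_⟩
  push_cast [hle]
  linarith

/-- The first coordinate runs over the integers up to `√lam / 2` of the parity opposite to `lam`,
so that the remaining sum of four squares is odd. -/
lemma le_sphereCount_five (lam : ℕ) : 1 / 64 * √lam ^ 3 ≤ sphereCount 5 lam := by
  have hsq : √(lam : ℝ) ^ 2 = lam := Real.sq_sqrt (by positivity)
  have hs0 : 0 ≤ √(lam : ℝ) := Real.sqrt_nonneg _
  rcases lt_or_ge √(lam : ℝ) 4 with hsmall | hlarge
  · have hpos : (1 : ℝ) ≤ sphereCount 5 lam := by exact_mod_cast sphereCount_pos (by norm_num) lam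
    have : √(lam : ℝ) ^ 3 ≤ 4 ^ 3 := by gcongr
    linarith
  set T := ⌊√(lam : ℝ) / 8⌋₊
  set S := (range (T + 1)).image fun t ↦ 2 * t + (lam + 1) % 2 with hS
  have hcard : #S = T + 1 := by
    rw [hS, card_image_of_injective _ fun a b h ↦ by simpa using h, card_range]
  have hhalf : ∀ x ∈ S, (x : ℝ) ≤ √lam / 2 := by
    simp only [hS, mem_image, mem_range]
    rintro _ ⟨t, ht, rfl⟩
    have htT : ((2 * t + (lam + 1) % 2 : ℕ) : ℝ) ≤ ((2 * T + 1 : ℕ) : ℝ) := by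
      exact_mod_cast (by lia)
    have hT : (T : ℝ) ≤ √lam / 8 := Nat.floor_le (by positivity)
    push_cast at htT ⊢
    linarith
  have hodd : ∀ x ∈ S, Odd (lam - x ^ 2) := by
    intro x hx
    have hle := (natCast_sub_sq_ge (hhalf x hx)).1
    obtain ⟨t, -, rfl⟩ := mem_image.1 hx
    rw [Nat.odd_sub hle, Nat.odd_iff, Nat.even_iff, Nat.pow_mod, Nat.mul_add_mod]
    rcases Nat.mod_two_eq_zero_or_one lam with h | h <;> simp [h, Nat.add_mod]
  have hfour : ∀ x ∈ S, 3 / 4 * (lam : ℝ) ≤ sphereCount 4 (lam - x ^ 2) := fun x hx ↦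
    (natCast_sub_sq_ge (hhalf x hx)).2.trans (by exact_mod_cast le_sphereCount_four (hodd x hx))
  calc 1 / 64 * √(lam : ℝ) ^ 3 ≤ √(lam : ℝ) / 8 * (3 / 4 * √(lam : ℝ) ^ 2) := by
        linarith [pow_nonneg hs0 3]
    _ ≤ (#S : ℝ) * (3 / 4 * (lam : ℝ)) := by
        rw [hcard, hsq]
        gcongr
        exact_mod_cast (Nat.lt_floor_add_one _).le
    _ ≤ (sphereCount 5 lam : ℝ) :=
        card_mul_le_sphereCount_succ (fun x hx ↦ (natCast_sub_sq_ge (hhalf x hx)).1) hfour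

lemma exists_mul_sqrt_pow_le_sphereCount (hn : 5 ≤ n) :
    ∃ c : ℝ, 0 < c ∧ ∀ lam : ℕ, c * √lam ^ (n - 2) ≤ sphereCount n lam := by
  induction n, hn using Nat.le_induction with
  | base => exact ⟨1 / 64, by norm_num, le_sphereCount_five⟩
  | succ n hn ih =>
    obtain ⟨c, hc, hcount⟩ := ih
    refine ⟨c / 2 ^ (n - 1), by positivity, fun lam ↦ ?_⟩
    set T := ⌊√(lam : ℝ) / 2⌋₊
    have hhalf : ∀ x ∈ range (T + 1), (x : ℝ) ≤ √lam / 2 := fun x hx ↦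
      (Nat.cast_le.2 (Nat.lt_succ_iff.1 (mem_range.1 hx))).trans (Nat.floor_le (by positivity))
    have hslice : ∀ x ∈ range (T + 1), c * (√lam / 2) ^ (n - 2) ≤ sphereCount n (lam - x ^ 2) := by
      intro x hx
      refine le_trans ?_ (hcount _)
      gcongr
      apply Real.le_sqrt_of_sq_le
      rw [div_pow, Real.sq_sqrt (by positivity)]
      exact le_trans (by linarith [lam.cast_nonneg (α := ℝ)]) (natCast_sub_sq_ge (hhalf x hx)).2
    obtain ⟨k, rfl⟩ := Nat.exists_eq_add_of_le hn
    calc c / 2 ^ (5 + k - 1) * √(lam : ℝ) ^ (5 + k + 1 - 2)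
        = √(lam : ℝ) / 2 * (c * (√(lam : ℝ) / 2) ^ (5 + k - 2)) := by
          rw [show 5 + k - 1 = k + 4 by lia, show 5 + k + 1 - 2 = k + 4 by lia,
            show 5 + k - 2 = k + 3 by lia, div_pow, pow_succ (√(lam : ℝ)) (k + 3),
            pow_succ 2 (k + 3)]
          field_simp
      _ ≤ (#(range (T + 1)) : ℝ) * (c * (√(lam : ℝ) / 2) ^ (5 + k - 2)) := by
          rw [card_range]
          gcongr
          exact_mod_cast (Nat.lt_floor_add_one _).le
      _ ≤ (sphereCount (5 + k + 1) lam : ℝ) :=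
          card_mul_le_sphereCount_succ (fun x hx ↦ (natCast_sub_sq_ge (hhalf x hx)).1) hslice

end SphereCount

/-! ### Divisor functions -/

section Divisors

lemma sum_comp_le_mul_sum {ι κ : Type*} [DecidableEq κ] {s : Finset ι} {t : Finset κ} {g : ι → κ}
    {f : κ → ℝ} {k : ℕ} (hf : ∀ y ∈ t, 0 ≤ f y) (hg : ∀ x ∈ s, g x ∈ t)
    (hk : ∀ y ∈ t, #{x ∈ s | g x = y} ≤ k) : ∑ x ∈ s, f (g x) ≤ k * ∑ y ∈ t, f y := by
  rw [← sum_fiberwise_of_maps_to' hg, mul_sum]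
  refine sum_le_sum fun y hy ↦ ?_
  rw [sum_const, nsmul_eq_mul]
  exact mul_le_mul_of_nonneg_right (by exact_mod_cast hk y hy) (hf y hy)

variable {ε : ℝ}

lemma add_one_le_mul_rpow (hε : 0 < ε) {p : ℕ} (hp : 2 ≤ p) (a : ℕ) :
    (a + 1 : ℝ) ≤ 1 / min 1 (ε * Real.log 2) * ((p : ℝ) ^ a) ^ ε := by
  set L := min 1 (ε * Real.log 2)
  have : 0 < Real.log 2 := Real.log_pos (by norm_num)
  have hL : 0 < L := lt_min one_pos (by positivity)
  rw [div_mul_eq_mul_div, one_mul, le_div_iff₀ hL]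
  have hp' : (2 : ℝ) ≤ p := by exact_mod_cast hp
  calc (a + 1 : ℝ) * L = a * L + L := by ring
    _ ≤ a * (ε * Real.log 2) + 1 := by
        gcongr
        exacts [min_le_right _ _, min_le_left _ _]
    _ ≤ Real.exp (a * (ε * Real.log 2)) := Real.add_one_le_exp _
    _ = ((2 : ℝ) ^ a) ^ ε := by
        rw [← Real.rpow_natCast, ← Real.rpow_mul zero_le_two, Real.rpow_def_of_pos zero_lt_two]
        ring_nf
    _ ≤ ((p : ℝ) ^ a) ^ ε := by gcongr

lemma add_one_le_rpow_of_le (hε : 0 < ε) {p : ℕ} (hp : (2 : ℝ) ^ (1 / ε) ≤ p) (a : ℕ) :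
    (a + 1 : ℝ) ≤ ((p : ℝ) ^ a) ^ ε := by
  have htwo : (2 : ℝ) ≤ (p : ℝ) ^ ε := by
    calc (2 : ℝ) = ((2 : ℝ) ^ (1 / ε)) ^ ε := by
          rw [← Real.rpow_mul zero_le_two, one_div, inv_mul_cancel₀ hε.ne', Real.rpow_one]
      _ ≤ (p : ℝ) ^ ε := by gcongr
  calc (a + 1 : ℝ) ≤ 2 ^ a := by exact_mod_cast Nat.lt_two_pow_self
    _ ≤ ((p : ℝ) ^ ε) ^ a := by gcongr
    _ = ((p : ℝ) ^ a) ^ ε := by rw [Real.rpow_pow_comm (by positivity)]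

lemma exists_card_divisors_le (hε : 0 < ε) :
    ∃ C : ℝ, 1 ≤ C ∧ ∀ n : ℕ, n ≠ 0 → (#n.divisors : ℝ) ≤ C * (n : ℝ) ^ ε := by
  set K := 1 / min 1 (ε * Real.log 2)
  have : 0 < Real.log 2 := Real.log_pos (by norm_num)
  have hK : 1 ≤ K := one_le_one_div (lt_min one_pos (by positivity)) (min_le_left _ _)
  set P := ⌈(2 : ℝ) ^ (1 / ε)⌉₊
  refine ⟨K ^ P, one_le_pow₀ hK, fun n hn ↦ ?_⟩
  have hlocal : ∀ p ∈ n.primeFactors, (n.factorization p + 1 : ℝ) ≤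
      (if p < P then K else 1) * ((p : ℝ) ^ n.factorization p) ^ ε := by
    intro p hp
    split_ifs with h
    · exact add_one_le_mul_rpow hε (Nat.prime_of_mem_primeFactors hp).two_le _
    · rw [one_mul]
      exact add_one_le_rpow_of_le hε ((Nat.le_ceil _).trans (by exact_mod_cast not_lt.1 h)) _
  have hsmall : ∏ p ∈ n.primeFactors, (if p < P then K else 1) ≤ K ^ P := by
    rw [prod_ite, prod_const, prod_const_one, mul_one]
    refine pow_le_pow_right₀ hK ?_
    calc #{p ∈ n.primeFactors | p < P} ≤ #(range P) :=
          card_le_card fun p hp ↦ mem_range.2 (mem_filter.1 hp).2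
      _ = P := card_range P
  have hfactor : ∏ p ∈ n.primeFactors, ((p : ℝ) ^ n.factorization p) ^ ε = (n : ℝ) ^ ε := by
    rw [Real.finsetProd_rpow _ _ fun _ _ ↦ by positivity]
    congr 1
    exact_mod_cast Nat.prod_factorization_pow_eq_self hn
  rw [Nat.card_divisors hn]
  push_cast
  calc ∏ p ∈ n.primeFactors, (n.factorization p + 1 : ℝ)
      ≤ ∏ p ∈ n.primeFactors, ((if p < P then K else 1) * ((p : ℝ) ^ n.factorization p) ^ ε) :=
        prod_le_prod (fun _ _ ↦ by positivity) hlocal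
    _ ≤ K ^ P * (n : ℝ) ^ ε := by
        rw [prod_mul_distrib, hfactor]
        gcongr

/-- The number of divisors of `m` that are at most `E`. -/
def divisorCountLE (E m : ℕ) : ℕ := #{q ∈ Icc 1 E | q ∣ m}

lemma divisorCountLE_pow (B E m : ℕ) : divisorCountLE E m ^ B =
    #{q ∈ Fintype.piFinset fun _ : Fin B ↦ Icc 1 E | univ.lcm q ∣ m} := by
  rw [divisorCountLE, ← Fintype.card_piFinset_const]
  congr 1
  ext q
  simp only [mem_filter, Fintype.mem_piFinset, Finset.lcm_dvd_iff, mem_univ, true_imp_iff,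
    forall_and]

lemma lcm_mem_Icc {B E : ℕ} {q : Fin B → ℕ} (hq : q ∈ Fintype.piFinset fun _ ↦ Icc 1 E) :
    univ.lcm q ∈ Icc 1 (E ^ B) := by
  have hmem (i : Fin B) : 1 ≤ q i ∧ q i ≤ E := mem_Icc.1 (Fintype.mem_piFinset.1 hq i)
  have hprod : 0 < ∏ i, q i := prod_pos fun i _ ↦ (hmem i).1
  have hdvd : univ.lcm q ∣ ∏ i, q i := Finset.lcm_dvd fun i hi ↦ dvd_prod_of_mem q hi
  refine mem_Icc.2 ⟨Nat.pos_of_dvd_of_pos hdvd hprod, (Nat.le_of_dvd hprod hdvd).trans ?_⟩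
  simpa using prod_le_prod' (s := univ) fun i _ ↦ (hmem i).2

lemma card_lcm_eq_le (B E : ℕ) {l : ℕ} (hl : l ≠ 0) :
    #{q ∈ Fintype.piFinset fun _ : Fin B ↦ Icc 1 E | univ.lcm q = l} ≤ #l.divisors ^ B := by
  rw [← Fintype.card_piFinset_const]
  refine card_le_card fun q hq ↦ Fintype.mem_piFinset.2 fun i ↦ Nat.mem_divisors.2 ⟨?_, hl⟩
  rw [← (mem_filter.1 hq).2]
  exact Finset.dvd_lcm (mem_univ i)

/-- With `η = τ / (B + 1)²`, there are `O(l ^ (η B))` tuples of least common multiple `l`, and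
`l ^ (η (B + 1)) ≤ E ^ τ` since `l ≤ E ^ B`. -/
lemma exists_card_lcm_eq_mul_inv_le (B : ℕ) {τ : ℝ} (hτ : 0 < τ) :
    ∃ C : ℝ, 0 ≤ C ∧ ∀ E : ℕ, 1 ≤ E → ∀ l ∈ Icc 1 (E ^ B),
      #{q ∈ Fintype.piFinset fun _ : Fin B ↦ Icc 1 E | univ.lcm q = l} * (l : ℝ)⁻¹ ≤
        C * (E : ℝ) ^ τ * (l : ℝ) ^ (-1 - τ / (B + 1) ^ 2) := by
  set η : ℝ := τ / (B + 1) ^ 2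
  have hη : 0 < η := by positivity
  obtain ⟨C, hC1, hC⟩ := exists_card_divisors_le hη
  refine ⟨C ^ B, by positivity, fun E hE l hl ↦ ?_⟩
  have hE1 : (1 : ℝ) ≤ E := by exact_mod_cast hE
  obtain ⟨hl1, hlE⟩ := mem_Icc.1 hl
  have hl0 : (0 : ℝ) < l := by exact_mod_cast hl1
  have hcard : (#{q ∈ Fintype.piFinset fun _ : Fin B ↦ Icc 1 E | univ.lcm q = l} : ℝ) ≤
      (C * (l : ℝ) ^ η) ^ B :=
    le_trans (by exact_mod_cast card_lcm_eq_le B E (Nat.ne_of_gt hl1))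
      (pow_le_pow_left₀ (by positivity) (hC l (Nat.ne_of_gt hl1)) B)
  have hlpow : (l : ℝ) ^ (η * (B + 1)) ≤ (E : ℝ) ^ τ := by
    calc (l : ℝ) ^ (η * (B + 1)) ≤ ((E : ℝ) ^ B) ^ (η * (B + 1)) := by
          gcongr
          exact_mod_cast hlE
      _ = (E : ℝ) ^ (B * (η * (B + 1))) := by rw [← Real.rpow_natCast_mul (by positivity)]
      _ ≤ (E : ℝ) ^ τ := by
          refine Real.rpow_le_rpow_of_exponent_le hE1 ?_
          have : η * (B + 1) ^ 2 = τ := by simp only [η]; field_simp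
          nlinarith
  calc _ ≤ (C * (l : ℝ) ^ η) ^ B * (l : ℝ)⁻¹ := by gcongr
    _ = C ^ B * (l : ℝ) ^ (η * (B + 1)) * (l : ℝ) ^ (-1 - η) := by
        rw [mul_pow, ← Real.rpow_mul_natCast hl0.le, mul_assoc, mul_assoc, ← Real.rpow_neg_one,
          ← Real.rpow_add hl0, ← Real.rpow_add hl0]
        ring_nf
    _ ≤ C ^ B * (E : ℝ) ^ τ * (l : ℝ) ^ (-1 - η) := by gcongr

lemma exists_sum_inv_lcm_le (B : ℕ) {τ : ℝ} (hτ : 0 < τ) :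
    ∃ C : ℝ, 0 ≤ C ∧ ∀ E : ℕ, 1 ≤ E →
      ∑ q ∈ Fintype.piFinset fun _ : Fin B ↦ Icc 1 E, ((univ.lcm q : ℕ) : ℝ)⁻¹ ≤
        C * (E : ℝ) ^ τ := by
  obtain ⟨C, hC0, hC⟩ := exists_card_lcm_eq_mul_inv_le B hτ
  set η : ℝ := τ / (B + 1) ^ 2
  have hη : 0 < η := by positivity
  have hsum : Summable fun l : ℕ ↦ (l : ℝ) ^ (-1 - η) := Real.summable_nat_rpow.2 (by linarith)
  refine ⟨C * ∑' l : ℕ, (l : ℝ) ^ (-1 - η), by positivity, fun E hE ↦ ?_⟩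
  rw [← sum_fiberwise_of_maps_to fun q hq ↦ lcm_mem_Icc hq]
  calc _ ≤ ∑ l ∈ Icc 1 (E ^ B), C * (E : ℝ) ^ τ * (l : ℝ) ^ (-1 - η) := by
        refine sum_le_sum fun l hl ↦ le_of_eq_of_le ?_ (hC E hE l hl)
        rw [sum_congr rfl fun q hq ↦ by rw [(mem_filter.1 hq).2], sum_const, nsmul_eq_mul]
    _ ≤ C * (E : ℝ) ^ τ * ∑' l : ℕ, (l : ℝ) ^ (-1 - η) := by
        rw [← mul_sum]
        gcongr
        exact hsum.sum_le_tsum _ fun _ _ ↦ by positivity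
    _ = _ := by ring

lemma exists_sum_divisorCountLE_pow_le (B : ℕ) {τ : ℝ} (hτ : 0 < τ) :
    ∃ C : ℝ, 0 ≤ C ∧ ∀ E X : ℕ, 1 ≤ E →
      ∑ m ∈ Icc 1 X, (divisorCountLE E m : ℝ) ^ B ≤ C * X * (E : ℝ) ^ τ := by
  obtain ⟨C, hC0, hC⟩ := exists_sum_inv_lcm_le B hτ
  refine ⟨C, hC0, fun E X hE ↦ ?_⟩
  set Q := Fintype.piFinset fun _ : Fin B ↦ Icc 1 E
  have hcount (l : ℕ) : (#{m ∈ Icc 1 X | l ∣ m} : ℝ) ≤ X * (l : ℝ)⁻¹ := by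
    have : #{m ∈ Icc 1 X | l ∣ m} = X / l := Nat.Ioc_filter_dvd_card_eq_div X l
    rw [this, ← div_eq_mul_inv]
    exact Nat.cast_div_le
  calc ∑ m ∈ Icc 1 X, (divisorCountLE E m : ℝ) ^ B
      = ∑ m ∈ Icc 1 X, ∑ q ∈ Q, if univ.lcm q ∣ m then (1 : ℝ) else 0 := by
        refine sum_congr rfl fun m _ ↦ ?_
        rw [sum_boole]
        exact_mod_cast divisorCountLE_pow B E m
    _ = ∑ q ∈ Q, (#{m ∈ Icc 1 X | univ.lcm q ∣ m} : ℝ) := by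
        rw [sum_comm]
        simp only [sum_boole]
    _ ≤ ∑ q ∈ Q, X * ((univ.lcm q : ℕ) : ℝ)⁻¹ := sum_le_sum fun q _ ↦ hcount _
    _ ≤ X * (C * (E : ℝ) ^ τ) := by
        rw [← mul_sum]
        gcongr
        exact hC E hE
    _ = C * X * (E : ℝ) ^ τ := by ring

end Divisors

/-! ### Multiples of a number far from rationals of small denominator -/

section MajorArcs

variable {N E : ℕ} {θ : ℝ}

/-- `θ` lies on a major arc: some `q ≤ E` brings `q * θ` within `E / N ^ 2` of an integer. -/
def InMajorArc (N E : ℕ) (θ : ℝ) : Prop :=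
  ∃ q ∈ Icc 1 E, |q * θ - round (q * θ)| ≤ (E : ℝ) / N ^ 2

/-- The integers `|u| ≤ 16 N` for which `u * θ` is within `1 / N` of an integer. -/
def nearIntPoints (N : ℕ) (θ : ℝ) : Finset ℤ :=
  {u ∈ Icc (-(16 * N : ℤ)) (16 * N) | |u * θ - round (u * θ)| ≤ 1 / N}

lemma mem_nearIntPoints {u : ℤ} : u ∈ nearIntPoints N θ ↔
    |(u : ℝ)| ≤ 16 * N ∧ |u * θ - round (u * θ)| ≤ 1 / N := by
  rw [nearIntPoints, mem_filter, mem_Icc, ← abs_le]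
  exact and_congr_left' (by exact_mod_cast Iff.rfl)

lemma card_le_of_forall_exists_eq_add_mul {S : Finset ℤ} {q : ℤ} {X : ℝ} (hX : 1 ≤ X)
    (h : ∀ u ∈ S, ∀ v ∈ S, ∃ k : ℤ, u = v + k * q ∧ |(k : ℝ)| ≤ X) : (#S : ℝ) ≤ 3 * X := by
  rcases S.eq_empty_or_nonempty with rfl | ⟨v, hv⟩
  · simp only [card_empty, Nat.cast_zero]
    linarith
  have hsub : S ⊆ (Icc (-⌊X⌋) ⌊X⌋).image fun k ↦ v + k * q := by
    intro u hu
    obtain ⟨k, hk, hkX⟩ := h u hu v hv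
    refine mem_image.2 ⟨k, mem_Icc.2 (abs_le.1 (Int.le_floor.2 ?_)), hk.symm⟩
    exact_mod_cast hkX
  have hcard := (card_le_card hsub).trans card_image_le
  have hfloor : (0 : ℤ) ≤ ⌊X⌋ := Int.floor_nonneg.2 (by linarith)
  rw [Int.card_Icc] at hcard
  have : (#S : ℝ) ≤ 2 * ⌊X⌋ + 1 := by exact_mod_cast (by lia : (#S : ℤ) ≤ 2 * ⌊X⌋ + 1)
  linarith [Int.floor_le X]

lemma exists_isCoprime_abs_mul_sub_le (hN : 0 < N) (θ : ℝ) :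
    ∃ q : ℕ, ∃ a : ℤ, 0 < q ∧ q ≤ N ∧ IsCoprime a (q : ℤ) ∧ |q * θ - a| ≤ 1 / N := by
  obtain ⟨r, happrox, hden⟩ := Real.exists_rat_abs_sub_le_and_den_le θ hN
  have : (0 : ℝ) < N := by exact_mod_cast hN
  have hq : (0 : ℝ) < r.den := by exact_mod_cast r.den_pos
  refine ⟨r.den, r.num, r.den_pos, hden, Int.isCoprime_iff_gcd_eq_one.2 r.reduced, ?_⟩
  calc |r.den * θ - r.num| = r.den * |θ - r| := by
        rw [← abs_of_pos hq, ← abs_mul, abs_of_pos hq, Rat.cast_def r]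
        congr 1
        field_simp
    _ ≤ r.den * (1 / ((N + 1) * r.den)) := by gcongr
    _ = 1 / (N + 1) := by field_simp
    _ ≤ 1 / N := by gcongr; linarith

lemma abs_mul_sub_mul_round_le {q : ℕ} {a u : ℤ} (hN : 0 < N) (hq : q ≤ N)
    (ha : |q * θ - a| ≤ 1 / N) (hu : u ∈ nearIntPoints N θ) :
    |u * a - q * round (u * θ)| ≤ 17 := by
  obtain ⟨hu16, hnear⟩ := mem_nearIntPoints.1 hu
  have : (0 : ℝ) < N := by exact_mod_cast hN
  have hq' : (q : ℝ) ≤ N := by exact_mod_cast hq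
  have : |(u * a - q * round (u * θ) : ℝ)| ≤ 17 := by
    calc |(u * a - q * round (u * θ) : ℝ)|
        = |q * (u * θ - round (u * θ)) - u * (q * θ - a)| := by ring_nf
      _ ≤ |q * (u * θ - round (u * θ))| + |u * (q * θ - a)| := abs_sub _ _
      _ = q * |u * θ - round (u * θ)| + |(u : ℝ)| * |q * θ - a| := by
          rw [abs_mul, abs_mul, Nat.abs_cast]
      _ ≤ N * (1 / N) + 16 * N * (1 / N) := by gcongr
      _ = 17 := by field_simp; norm_num
  exact_mod_cast this

lemma exists_eq_add_mul_of_mem_nearIntPoints {q : ℕ} {a u v : ℤ} (hE : 0 < E) (hN : 0 < N)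
    (hθ : ¬ InMajorArc N E θ) (hq : 0 < q) (hcop : IsCoprime a (q : ℤ))
    (hu : u ∈ nearIntPoints N θ) (hv : v ∈ nearIntPoints N θ)
    (huv : u * a - q * round (u * θ) = v * a - q * round (v * θ)) :
    ∃ k : ℤ, u = v + k * q ∧ |(k : ℝ)| ≤ 32 * (N / E) := by
  have hE' : (0 : ℝ) < E := by exact_mod_cast hE
  have hN' : (0 : ℝ) < N := by exact_mod_cast hN
  obtain ⟨hu16, hunear⟩ := mem_nearIntPoints.1 hu
  obtain ⟨hv16, hvnear⟩ := mem_nearIntPoints.1 hv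
  have hmul : (u - v) * a = q * (round (u * θ) - round (v * θ)) := by linarith
  obtain ⟨k, hk⟩ : (q : ℤ) ∣ u - v := hcop.symm.dvd_of_dvd_mul_right (Dvd.intro _ hmul.symm)
  refine ⟨k, by linarith, ?_⟩
  have hkr : (u : ℝ) - v = q * k := by exact_mod_cast hk
  rw [mul_div_assoc', le_div_iff₀ hE']
  rcases le_or_gt q E with hqE | hqE
  · have hfar : (E : ℝ) / N ^ 2 < |q * θ - round (q * θ)| := by
      by_contra! h
      exact hθ ⟨q, mem_Icc.2 ⟨hq, hqE⟩, h⟩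
    have hround : (round (u * θ) - round (v * θ) : ℤ) = k * a :=
      mul_left_cancel₀ (Nat.cast_ne_zero.2 hq.ne') (by rw [← hmul, hk]; ring)
    have hroundr : (round (u * θ) : ℝ) - round (v * θ) = k * a := by exact_mod_cast hround
    have hnear : |(k : ℝ)| * |q * θ - a| ≤ 2 / N := by
      calc |(k : ℝ)| * |q * θ - a| = |(u * θ - round (u * θ)) - (v * θ - round (v * θ))| := by
            rw [← abs_mul]
            congr 1
            linear_combination (-θ) * hkr + hroundr
        _ ≤ 1 / N + 1 / N := (abs_sub _ _).trans (add_le_add hunear hvnear)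
        _ = 2 / N := by ring
    have : |(k : ℝ)| * (E / N ^ 2) ≤ 2 / N :=
      le_trans (by gcongr; exact hfar.le.trans (round_le _ a)) hnear
    rw [mul_div_assoc', div_le_div_iff₀ (by positivity) hN'] at this
    nlinarith
  · calc |(k : ℝ)| * E ≤ |(k : ℝ)| * q := by gcongr
      _ = |(u : ℝ) - v| := by rw [hkr, abs_mul, Nat.abs_cast, mul_comm]
      _ ≤ 16 * N + 16 * N := (abs_sub _ _).trans (add_le_add hu16 hv16)
      _ = 32 * N := by ring

/-- For a good approximation `a / q` of `θ`, the integer `u * a - q * round (u * θ)` takes at most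
`35` values, and each fibre is contained in a short progression modulo `q`. -/
lemma card_nearIntPoints_le (hE : 1 ≤ E) (hEN : E ≤ N) (hθ : ¬ InMajorArc N E θ) :
    (#(nearIntPoints N θ) : ℝ) ≤ 3360 * (N / E) := by
  have hN : 0 < N := hE.trans hEN
  have hNE : 1 ≤ (N : ℝ) / E := (one_le_div (by positivity)).2 (by exact_mod_cast hEN)
  obtain ⟨q, a, hq, hqN, hcop, happrox⟩ := exists_isCoprime_abs_mul_sub_le hN θ
  set t : ℤ → ℤ := fun u ↦ u * a - q * round (u * θ)
  have hmaps : ∀ u ∈ nearIntPoints N θ, t u ∈ Icc (-17 : ℤ) 17 := fun u hu ↦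
    mem_Icc.2 (abs_le.1 (abs_mul_sub_mul_round_le hN hqN happrox hu))
  have hfibre : ∀ b ∈ Icc (-17 : ℤ) 17,
      (#{u ∈ nearIntPoints N θ | t u = b} : ℝ) ≤ 3 * (32 * (N / E)) := by
    refine fun b _ ↦ card_le_of_forall_exists_eq_add_mul (q := q) (by linarith)
      fun u hu v hv ↦ ?_
    rw [mem_filter] at hu hv
    exact exists_eq_add_mul_of_mem_nearIntPoints hE hN hθ hq hcop hu.1 hv.1
      (hu.2.trans hv.2.symm)
  calc (#(nearIntPoints N θ) : ℝ)
      = ∑ b ∈ Icc (-17 : ℤ) 17, (#{u ∈ nearIntPoints N θ | t u = b} : ℝ) := by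
        exact_mod_cast card_eq_sum_card_fiberwise hmaps
    _ ≤ ∑ _b ∈ Icc (-17 : ℤ) 17, 3 * (32 * ((N : ℝ) / E)) := sum_le_sum hfibre
    _ = 3360 * (N / E) := by
        have hcard : #(Icc (-17 : ℤ) 17) = 35 := rfl
        rw [sum_const, hcard, nsmul_eq_mul]
        ring

end MajorArcs

/-! ### Additive characters -/

open scoped FourierTransform ComplexConjugate

section FourierChar

lemma coe_fourierChar_add (s t : ℝ) : (𝐞 (s + t) : ℂ) = 𝐞 s * 𝐞 t := by
  rw [AddChar.map_add_eq_mul, Circle.coe_mul]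

lemma coe_fourierChar_neg (t : ℝ) : (𝐞 (-t) : ℂ) = conj (𝐞 t : ℂ) := by
  rw [AddChar.map_neg_eq_inv, Circle.coe_inv_eq_conj]

lemma fourierChar_mul_fourierChar_neg (t : ℝ) : (𝐞 t : ℂ) * 𝐞 (-t) = 1 := by
  rw [← coe_fourierChar_add, add_neg_cancel, AddChar.map_zero_eq_one, Circle.coe_one]

lemma coe_fourierChar_intCast (k : ℤ) : (𝐞 (k : ℝ) : ℂ) = 1 := by
  rw [Real.fourierChar_apply, Complex.exp_eq_one_iff]
  exact ⟨k, by push_cast; ring⟩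

lemma coe_fourierChar_sub_intCast (t : ℝ) (k : ℤ) : (𝐞 (t - k) : ℂ) = 𝐞 t := by
  rw [sub_eq_add_neg, coe_fourierChar_add, ← Int.cast_neg, coe_fourierChar_intCast, mul_one]

lemma norm_coe_fourierChar_sub_one (t : ℝ) :
    ‖(𝐞 t : ℂ) - 1‖ = 2 * |Real.sin (Real.pi * t)| := by
  rw [Real.fourierChar_apply, mul_comm, Complex.norm_exp_I_mul_ofReal_sub_one, norm_mul,
    Real.norm_eq_abs, Real.norm_eq_abs, abs_two]
  ring_nf

lemma four_mul_abs_sub_round_le (t : ℝ) : 4 * |t - round t| ≤ ‖(𝐞 t : ℂ) - 1‖ := by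
  rw [← coe_fourierChar_sub_intCast t (round t), norm_coe_fourierChar_sub_one]
  set s := t - round t
  have hs : |Real.pi * s| ≤ Real.pi / 2 := by
    rw [abs_mul, abs_of_pos Real.pi_pos]
    nlinarith [Real.pi_pos, abs_sub_round t]
  have hsin := Real.mul_abs_le_abs_sin hs
  rw [abs_mul, abs_of_pos Real.pi_pos, ← mul_assoc, div_mul_cancel₀ _ Real.pi_ne_zero] at hsin
  linarith

end FourierChar

/-! ### Weyl sums -/

section Weyl

variable {N E : ℕ} {θ : ℝ} {u : ℤ}

/-- The second difference of a function on the integers, centred at the middle point. -/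
def secondDiff {R : Type*} [Ring R] (a : ℤ → R) (y : ℤ) : R := a (y + 1) - 2 * a y + a (y - 1)

/-- The tent of height and half-width `2 * N`, used as a smooth cutoff equal to at least `N` on
`[-N, N]`. -/
def tent (N : ℕ) (y : ℤ) : ℤ := max 0 (2 * N - |y|)

lemma tent_nonneg (N : ℕ) (y : ℤ) : 0 ≤ tent N y := le_max_left _ _

lemma abs_tent_le (N : ℕ) (y : ℤ) : |tent N y| ≤ 2 * N := by
  rw [abs_of_nonneg (tent_nonneg N y)]
  exact max_le (by positivity) (sub_le_self _ (abs_nonneg y))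

lemma le_tent {y : ℤ} (h : |y| ≤ N) : N ≤ tent N y := le_max_of_le_right (by linarith)

lemma tent_eq_zero {y : ℤ} (h : 2 * (N : ℤ) ≤ |y|) : tent N y = 0 := max_eq_left (by linarith)

lemma abs_tent_add_one_sub_le (N : ℕ) (y : ℤ) : |tent N (y + 1) - tent N y| ≤ 1 := by
  simp only [tent, abs_eq_max_neg]
  omega

lemma abs_secondDiff_tent_le (N : ℕ) (y : ℤ) : |secondDiff (tent N) y| ≤
    (if y = 0 then 2 else 0) + (if y = 2 * N then 2 else 0) + (if y = -(2 * N) then 2 else 0) := by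
  simp only [secondDiff, tent, abs_eq_max_neg]
  split_ifs <;> omega

lemma sum_abs_secondDiff_tent_le (N : ℕ) (s : Finset ℤ) (u : ℤ) :
    ∑ y ∈ s, |secondDiff (tent N) (y + u)| ≤ 6 := by
  have hpoint (b : ℤ) : ∑ y ∈ s, (if y + u = b then (2 : ℤ) else 0) ≤ 2 := by
    simp only [← eq_sub_iff_add_eq, sum_ite_eq']
    split_ifs <;> norm_num
  calc ∑ y ∈ s, |secondDiff (tent N) (y + u)|
      ≤ ∑ y ∈ s, ((if y + u = 0 then 2 else 0) + (if y + u = 2 * N then 2 else 0) +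
          (if y + u = -(2 * N) then 2 else 0)) := sum_le_sum fun y _ ↦ abs_secondDiff_tent_le N _
    _ ≤ 2 + 2 + 2 := by
        rw [sum_add_distrib, sum_add_distrib]
        exact add_le_add_three (hpoint _) (hpoint _) (hpoint _)

lemma abs_secondDiff_mul_le {a b : ℤ → ℤ} {A : ℤ} (ha : ∀ y, |a y| ≤ A) (hb : ∀ y, |b y| ≤ A)
    (ha' : ∀ y, |a (y + 1) - a y| ≤ 1) (hb' : ∀ y, |b (y + 1) - b y| ≤ 1) (y : ℤ) :
    |secondDiff (fun z ↦ a z * b z) y| ≤ A * |secondDiff a y| + A * |secondDiff b y| + 2 := by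
  have ha₀ : |a y - a (y - 1)| ≤ 1 := by simpa only [sub_add_cancel] using ha' (y - 1)
  have hb₀ : |b y - b (y - 1)| ≤ 1 := by simpa only [sub_add_cancel] using hb' (y - 1)
  calc |secondDiff (fun z ↦ a z * b z) y|
      = |b y * secondDiff a y + a y * secondDiff b y + (a (y + 1) - a y) * (b (y + 1) - b y) +
          (a y - a (y - 1)) * (b y - b (y - 1))| := by
        simp only [secondDiff]
        ring_nf
    _ ≤ |b y| * |secondDiff a y| + |a y| * |secondDiff b y| +
          |a (y + 1) - a y| * |b (y + 1) - b y| + |a y - a (y - 1)| * |b y - b (y - 1)| := by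
        simp only [← abs_mul]
        exact (abs_add_le _ _).trans (add_le_add_left (abs_add_three _ _ _) _)
    _ ≤ A * |secondDiff a y| + A * |secondDiff b y| + 1 * 1 + 1 * 1 := by
        gcongr
        exacts [hb y, ha y, ha' y, hb' y]
    _ = A * |secondDiff a y| + A * |secondDiff b y| + 2 := by ring

lemma sum_Icc_comp_add {M : Type*} [AddCommMonoid M] {L L' : ℤ} {g : ℤ → M}
    (hg : ∀ y, L < |y| → g y = 0) (hu : L + |u| ≤ L') :
    ∑ y ∈ Icc (-L') L', g (y + u) = ∑ y ∈ Icc (-L) L, g y := by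
  have hmap : ∑ y ∈ Icc (-L') L', g (y + u) =
      ∑ y ∈ (Icc (-L') L').map (addRightEmbedding u), g y := by
    simp only [sum_map, addRightEmbedding_apply]
  rw [hmap]
  refine (sum_subset (fun y hy ↦ ?_) fun y _ hy ↦ hg y ?_).symm
  · rw [mem_Icc, ← abs_le] at hy
    refine mem_map.2 ⟨y - u, mem_Icc.2 (abs_le.1 ?_), sub_add_cancel y u⟩
    exact (abs_sub y u).trans (by linarith)
  · rwa [mem_Icc, ← abs_le, not_le] at hy

lemma sum_comp_add_mul_fourierChar {L : ℤ} {a : ℤ → ℂ} (ha : ∀ y, L ≤ |y| → a y = 0)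
    (hu : |u| ≤ 1) (φ : ℝ) : ∑ y ∈ Icc (-L) L, a (y + u) * 𝐞 (y * φ) =
      𝐞 (-(u * φ)) * ∑ y ∈ Icc (-L) L, a y * 𝐞 (y * φ) := by
  have hsupp : ∀ y : ℤ, L - 1 < |y| → a y * 𝐞 (y * φ) = 0 := fun y hy ↦ by
    rw [ha y (by omega), zero_mul]
  have hzero : ∑ y ∈ Icc (-L) L, a y * 𝐞 (y * φ) =
      ∑ y ∈ Icc (-(L - 1)) (L - 1), a y * 𝐞 (y * φ) := by
    simpa only [add_zero] using sum_Icc_comp_add (u := 0) (L' := L) hsupp (by simp)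
  rw [hzero, ← sum_Icc_comp_add (u := u) (L' := L) hsupp (by linarith), mul_sum]
  refine sum_congr rfl fun y _ ↦ ?_
  have harg : ((y : ℝ) * φ) = -(u * φ) + ((y + u : ℤ) : ℝ) * φ := by push_cast; ring
  rw [harg, coe_fourierChar_add]
  ring

lemma norm_sum_mul_fourierChar_le_sum_norm_secondDiff {L : ℤ} {a : ℤ → ℂ}
    (ha : ∀ y, L ≤ |y| → a y = 0) (φ : ℝ) :
    ‖(𝐞 φ : ℂ) - 1‖ ^ 2 * ‖∑ y ∈ Icc (-L) L, a y * 𝐞 (y * φ)‖ ≤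
      ∑ y ∈ Icc (-L) L, ‖secondDiff a y‖ := by
  set S := ∑ y ∈ Icc (-L) L, a y * 𝐞 (y * φ)
  have hfactor : ‖(𝐞 φ : ℂ) - 1‖ ^ 2 = ‖(𝐞 (-φ) : ℂ) - 2 + 𝐞 φ‖ := by
    have : ((𝐞 φ : ℂ) - 1) ^ 2 = 𝐞 φ * (𝐞 (-φ) - 2 + 𝐞 φ) := by
      linear_combination (-1) * fourierChar_mul_fourierChar_neg φ
    rw [← norm_pow, this, norm_mul, Circle.norm_coe, one_mul]
  have hsum : ((𝐞 (-φ) : ℂ) - 2 + 𝐞 φ) * S =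
      ∑ y ∈ Icc (-L) L, secondDiff a y * 𝐞 (y * φ) := by
    have hnext := sum_comp_add_mul_fourierChar (u := 1) ha (by simp) φ
    have hprev := sum_comp_add_mul_fourierChar (u := -1) ha (by simp) φ
    simp only [Int.cast_neg, Int.cast_one, neg_mul, one_mul, neg_neg, ← sub_eq_add_neg]
      at hnext hprev
    simp only [secondDiff, add_mul, sub_mul, mul_assoc, sum_add_distrib, sum_sub_distrib,
      ← mul_sum]
    rw [hnext, hprev]
  rw [hfactor, ← norm_mul, hsum]
  refine (norm_sum_le _ _).trans_eq (sum_congr rfl fun y _ ↦ ?_)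
  rw [norm_mul, Circle.norm_coe, mul_one]

/-- The quadratic Weyl sum at frequency `θ`, smoothed by the tent. -/
def weylSum (N : ℕ) (θ : ℝ) : ℂ :=
  ∑ y ∈ Icc (-(2 * N : ℤ)) (2 * N), (tent N y : ℂ) * 𝐞 ((y : ℝ) ^ 2 * θ)

/-- The linear exponential sum which arises from `weylSum` by Weyl differencing with shift `u`. -/
def weylDiffSum (N : ℕ) (θ : ℝ) (u : ℤ) : ℂ :=
  ∑ y ∈ Icc (-(2 * N : ℤ)) (2 * N), ((tent N y * tent N (y + u) : ℤ) : ℂ) * 𝐞 (y * (2 * u * θ))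

lemma weylSum_eq_sum_comp_add {y : ℤ} (hy : y ∈ Icc (-(2 * N : ℤ)) (2 * N)) :
    weylSum N θ = ∑ u ∈ Icc (-(4 * N : ℤ)) (4 * N),
      (tent N (y + u) : ℂ) * 𝐞 (((y + u : ℤ) : ℝ) ^ 2 * θ) := by
  rw [mem_Icc, ← abs_le] at hy
  simp only [add_comm y]
  refine (sum_Icc_comp_add (g := fun z ↦ (tent N z : ℂ) * 𝐞 ((z : ℝ) ^ 2 * θ))
    (fun z hz ↦ ?_) (by linarith)).symm
  rw [tent_eq_zero hz.le, Int.cast_zero, zero_mul]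

lemma norm_sq_weylSum_le (N : ℕ) (θ : ℝ) :
    ‖weylSum N θ‖ ^ 2 ≤ ∑ u ∈ Icc (-(4 * N : ℤ)) (4 * N), ‖weylDiffSum N θ u‖ := by
  have hexpand : conj (weylSum N θ) * weylSum N θ =
      ∑ u ∈ Icc (-(4 * N : ℤ)) (4 * N), 𝐞 ((u : ℝ) ^ 2 * θ) * weylDiffSum N θ u := by
    conv_lhs => enter [1]; rw [weylSum, map_sum]
    rw [sum_mul, sum_congr rfl fun y hy ↦ by rw [weylSum_eq_sum_comp_add hy, mul_sum], sum_comm]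
    refine sum_congr rfl fun u _ ↦ ?_
    rw [weylDiffSum, mul_sum]
    refine sum_congr rfl fun y _ ↦ ?_
    have hphase : (𝐞 (-((y : ℝ) ^ 2 * θ)) : ℂ) * 𝐞 (((y + u : ℤ) : ℝ) ^ 2 * θ) =
        𝐞 ((u : ℝ) ^ 2 * θ) * 𝐞 (y * (2 * u * θ)) := by
      rw [← coe_fourierChar_add, ← coe_fourierChar_add]
      push_cast
      ring_nf
    rw [map_mul, ← coe_fourierChar_neg, map_intCast, Int.cast_mul]
    linear_combination ((tent N y : ℂ) * tent N (y + u)) * hphase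
  calc ‖weylSum N θ‖ ^ 2 = ‖conj (weylSum N θ) * weylSum N θ‖ := by
        rw [norm_mul, RCLike.norm_conj, sq]
    _ ≤ ∑ u ∈ Icc (-(4 * N : ℤ)) (4 * N), ‖𝐞 ((u : ℝ) ^ 2 * θ) * weylDiffSum N θ u‖ := by
        rw [hexpand]
        exact norm_sum_le _ _
    _ = ∑ u ∈ Icc (-(4 * N : ℤ)) (4 * N), ‖weylDiffSum N θ u‖ := by
        simp only [norm_mul, Circle.norm_coe, one_mul]

lemma card_Icc_neg_two_mul (N : ℕ) : #(Icc (-(2 * N : ℤ)) (2 * N)) = 4 * N + 1 := by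
  rw [Int.card_Icc]
  omega

lemma norm_sum_Icc_mul_fourierChar_le (hN : 1 ≤ N) {a : ℤ → ℤ} {A : ℝ} (ha : ∀ y, |(a y : ℝ)| ≤ A)
    (φ : ℤ → ℝ) : ‖∑ y ∈ Icc (-(2 * N : ℤ)) (2 * N), (a y : ℂ) * 𝐞 (φ y)‖ ≤ 5 * N * A := by
  have : (1 : ℝ) ≤ N := by exact_mod_cast hN
  have hA : 0 ≤ A := (abs_nonneg _).trans (ha 0)
  calc ‖∑ y ∈ Icc (-(2 * N : ℤ)) (2 * N), (a y : ℂ) * 𝐞 (φ y)‖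
      ≤ #(Icc (-(2 * N : ℤ)) (2 * N)) • A := by
        refine (norm_sum_le _ _).trans (sum_le_card_nsmul _ _ _ fun y _ ↦ ?_)
        rw [norm_mul, Circle.norm_coe, mul_one, Complex.norm_intCast]
        exact ha y
    _ = (4 * N + 1) * A := by rw [card_Icc_neg_two_mul, nsmul_eq_mul]; push_cast; ring
    _ ≤ 5 * N * A := by gcongr; linarith

lemma norm_weylSum_le (hN : 1 ≤ N) (θ : ℝ) : ‖weylSum N θ‖ ≤ 10 * (N : ℝ) ^ 2 :=
  (norm_sum_Icc_mul_fourierChar_le hN (A := 2 * N) (fun y ↦ by exact_mod_cast abs_tent_le N y)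
    fun y ↦ (y : ℝ) ^ 2 * θ).trans_eq (by ring)

lemma norm_weylDiffSum_le (hN : 1 ≤ N) (θ : ℝ) (u : ℤ) :
    ‖weylDiffSum N θ u‖ ≤ 20 * (N : ℝ) ^ 3 := by
  refine (norm_sum_Icc_mul_fourierChar_le hN (A := (2 * N) * (2 * N)) (fun y ↦ ?_)
    fun y ↦ y * (2 * u * θ)).trans_eq (by ring)
  rw [Int.cast_mul, abs_mul]
  have hbound (z : ℤ) : |(tent N z : ℝ)| ≤ 2 * N := by exact_mod_cast abs_tent_le N z
  gcongr <;> apply hbound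

lemma sum_abs_secondDiff_tent_mul_le (hN : 1 ≤ N) (u : ℤ) :
    ∑ y ∈ Icc (-(2 * N : ℤ)) (2 * N), |secondDiff (fun z ↦ tent N z * tent N (z + u)) y| ≤
      34 * N := by
  have hshift (y : ℤ) : secondDiff (fun z ↦ tent N (z + u)) y = secondDiff (tent N) (y + u) := by
    simp only [secondDiff, add_right_comm, sub_add_eq_add_sub]
  have hpoint (y : ℤ) : |secondDiff (fun z ↦ tent N z * tent N (z + u)) y| ≤
      2 * N * |secondDiff (tent N) (y + 0)| + 2 * N * |secondDiff (tent N) (y + u)| + 2 := by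
    rw [add_zero, ← hshift]
    refine abs_secondDiff_mul_le (abs_tent_le N) (fun z ↦ abs_tent_le N _)
      (abs_tent_add_one_sub_le N) (fun z ↦ ?_) y
    rw [add_right_comm]
    exact abs_tent_add_one_sub_le N _
  calc ∑ y ∈ Icc (-(2 * N : ℤ)) (2 * N), |secondDiff (fun z ↦ tent N z * tent N (z + u)) y|
      ≤ ∑ y ∈ Icc (-(2 * N : ℤ)) (2 * N), (2 * N * |secondDiff (tent N) (y + 0)| +
          2 * N * |secondDiff (tent N) (y + u)| + 2) := sum_le_sum fun y _ ↦ hpoint y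
    _ ≤ 2 * N * 6 + 2 * N * 6 + (4 * N + 1) * 2 := by
        rw [sum_add_distrib, sum_add_distrib, ← mul_sum, ← mul_sum, sum_const,
          card_Icc_neg_two_mul, nsmul_eq_mul, Nat.cast_add, Nat.cast_mul, Nat.cast_one]
        gcongr
        exacts [sum_abs_secondDiff_tent_le N _ 0, sum_abs_secondDiff_tent_le N _ u, le_rfl]
    _ ≤ 34 * N := by omega

lemma sq_sub_round_mul_norm_weylDiffSum_le (hN : 1 ≤ N) (θ : ℝ) (u : ℤ) :
    16 * (2 * u * θ - round (2 * u * θ)) ^ 2 * ‖weylDiffSum N θ u‖ ≤ 34 * N := by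
  set a : ℤ → ℤ := fun y ↦ tent N y * tent N (y + u)
  have ha : ∀ y : ℤ, 2 * (N : ℤ) ≤ |y| → (a y : ℂ) = 0 := fun y hy ↦ by
    rw [Int.cast_eq_zero, mul_eq_zero]
    exact Or.inl (tent_eq_zero hy)
  calc 16 * (2 * u * θ - round (2 * u * θ)) ^ 2 * ‖weylDiffSum N θ u‖
      = (4 * |2 * u * θ - round (2 * u * θ)|) ^ 2 * ‖weylDiffSum N θ u‖ := by
        rw [mul_pow, sq_abs]
        norm_num
    _ ≤ ‖(𝐞 (2 * u * θ) : ℂ) - 1‖ ^ 2 * ‖weylDiffSum N θ u‖ := by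
        gcongr
        exact four_mul_abs_sub_round_le _
    _ ≤ ∑ y ∈ Icc (-(2 * N : ℤ)) (2 * N), ‖secondDiff (fun y ↦ (a y : ℂ)) y‖ :=
        norm_sum_mul_fourierChar_le_sum_norm_secondDiff ha _
    _ = ((∑ y ∈ Icc (-(2 * N : ℤ)) (2 * N), |secondDiff a y| : ℤ) : ℝ) := by
        push_cast
        refine sum_congr rfl fun y _ ↦ ?_
        rw [← Int.cast_abs, Int.cast_abs, ← Complex.norm_intCast]
        simp only [secondDiff]
        push_cast
        rfl
    _ ≤ 34 * N := by exact_mod_cast sum_abs_secondDiff_tent_mul_le hN u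

/-- The index of the interval of length `1 / N` which contains the signed distance from `2 * u * θ`
to the nearest integer. -/
def weylIndex (N : ℕ) (θ : ℝ) (u : ℤ) : ℤ := ⌊N * (2 * u * θ - round (2 * u * θ))⌋

lemma norm_weylDiffSum_le_weylIndex (hN : 1 ≤ N) (θ : ℝ) (u : ℤ) :
    ‖weylDiffSum N θ u‖ ≤ 65 * (N : ℝ) ^ 3 * (1 / (1 + (weylIndex N θ u : ℝ) ^ 2)) := by
  rw [mul_one_div, le_div_iff₀ (by positivity)]
  set v := 2 * u * θ - round (2 * u * θ)
  set k : ℝ := ↑(weylIndex N θ u)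
  set s := ‖weylDiffSum N θ u‖
  have hk : k ^ 2 ≤ 2 * (N * v) ^ 2 + 2 := by
    have hle : k ≤ N * v := Int.floor_le _
    have hlt : N * v < k + 1 := Int.lt_floor_add_one _
    nlinarith [sq_nonneg (2 * (N * v) - k)]
  have hsmall : s ≤ 20 * (N : ℝ) ^ 3 := norm_weylDiffSum_le hN θ u
  have hlarge : (N : ℝ) ^ 2 * (16 * v ^ 2 * s) ≤ N ^ 2 * (34 * N) :=
    mul_le_mul_of_nonneg_left (sq_sub_round_mul_norm_weylDiffSum_le hN θ u) (sq_nonneg _)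
  calc s * (1 + k ^ 2) ≤ s * (3 + 2 * (N * v) ^ 2) :=
        mul_le_mul_of_nonneg_left (by linarith) (norm_nonneg _)
    _ = 3 * s + N ^ 2 * (16 * v ^ 2 * s) / 8 := by ring
    _ ≤ 3 * (20 * (N : ℝ) ^ 3) + N ^ 2 * (34 * N) / 8 := by gcongr
    _ ≤ 65 * (N : ℝ) ^ 3 := by nlinarith [pow_nonneg (Nat.cast_nonneg (α := ℝ) N) 3]

lemma card_filter_weylIndex_eq_le (hN : 0 < N) (θ : ℝ) (k : ℤ) :
    #{u ∈ Icc (-(4 * N : ℤ)) (4 * N) | weylIndex N θ u = k} ≤ #(nearIntPoints N θ) := by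
  rcases eq_empty_or_nonempty {u ∈ Icc (-(4 * N : ℤ)) (4 * N) | weylIndex N θ u = k}
    with h | ⟨v, hv⟩
  · simp only [h, card_empty, zero_le]
  rw [mem_filter, mem_Icc] at hv
  refine card_le_card_of_injOn (fun u ↦ 2 * (u - v)) (fun u hu ↦ ?_) fun u _ w _ huw ↦ ?_
  · rw [mem_coe, mem_filter, mem_Icc] at hu
    have hN' : (0 : ℝ) < N := by exact_mod_cast hN
    refine mem_coe.2 (mem_nearIntPoints.2 ⟨?_, ?_⟩)
    · have : |2 * (u - v)| ≤ 16 * (N : ℤ) := abs_le.2 ⟨by linarith, by linarith⟩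
      exact_mod_cast this
    refine (round_le _ (round (2 * u * θ) - round (2 * v * θ))).trans ?_
    have hfloor : |N * (2 * u * θ - round (2 * u * θ)) - N * (2 * v * θ - round (2 * v * θ))| < 1 :=
      Int.abs_sub_lt_one_of_floor_eq_floor (hu.2.trans hv.2.symm)
    rw [← mul_sub, abs_mul, abs_of_pos hN'] at hfloor
    rw [le_div_iff₀' hN']
    refine le_trans (le_of_eq ?_) hfloor.le
    push_cast
    ring_nf
  · simpa using huw

lemma summable_one_div_one_add_int_sq : Summable fun k : ℤ ↦ 1 / (1 + (k : ℝ) ^ 2) := by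
  have hsq := (Real.summable_one_div_int_pow (p := 2)).2 one_lt_two
  refine (hsq.add (hasSum_ite_eq (0 : ℤ) (1 : ℝ)).summable).of_nonneg_of_le
    (fun k ↦ by positivity) fun k ↦ ?_
  by_cases hk : k = 0
  · simp [hk]
  · have : (0 : ℝ) < (k : ℝ) ^ 2 := by positivity
    rw [if_neg hk, add_zero]
    gcongr
    linarith

lemma norm_sq_weylSum_le_card_nearIntPoints (hN : 1 ≤ N) (θ : ℝ) : ‖weylSum N θ‖ ^ 2 ≤
    65 * (N : ℝ) ^ 3 * (#(nearIntPoints N θ) * ∑' k : ℤ, 1 / (1 + (k : ℝ) ^ 2)) := by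
  set s := Icc (-(4 * N : ℤ)) (4 * N)
  calc ‖weylSum N θ‖ ^ 2 ≤ ∑ u ∈ s, ‖weylDiffSum N θ u‖ := norm_sq_weylSum_le N θ
    _ ≤ ∑ u ∈ s, 65 * (N : ℝ) ^ 3 * (1 / (1 + (weylIndex N θ u : ℝ) ^ 2)) :=
        sum_le_sum fun u _ ↦ norm_weylDiffSum_le_weylIndex hN θ u
    _ ≤ 65 * (N : ℝ) ^ 3 * (#(nearIntPoints N θ) *
          ∑ k ∈ s.image (weylIndex N θ), 1 / (1 + (k : ℝ) ^ 2)) := by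
        rw [← mul_sum]
        gcongr
        exact sum_comp_le_mul_sum (f := fun k : ℤ ↦ 1 / (1 + (k : ℝ) ^ 2))
          (fun k _ ↦ by positivity) (fun u hu ↦ mem_image_of_mem _ hu)
          fun k _ ↦ card_filter_weylIndex_eq_le hN θ k
    _ ≤ 65 * (N : ℝ) ^ 3 * (#(nearIntPoints N θ) * ∑' k : ℤ, 1 / (1 + (k : ℝ) ^ 2)) := by
        gcongr
        exact summable_one_div_one_add_int_sq.sum_le_tsum _ fun k _ ↦ by positivity

lemma exists_inMajorArc_of_lt_norm_sq_weylSum : ∃ C : ℝ, 1 ≤ C ∧ ∀ N E : ℕ, 1 ≤ E → E ≤ N →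
    ∀ θ : ℝ, C * (N : ℝ) ^ 4 / E < ‖weylSum N θ‖ ^ 2 → InMajorArc N E θ := by
  set c := ∑' k : ℤ, 1 / (1 + (k : ℝ) ^ 2)
  have hc : 0 ≤ c := tsum_nonneg fun k ↦ by positivity
  refine ⟨65 * 3360 * c + 1, by linarith [mul_nonneg (by norm_num : (0 : ℝ) ≤ 65 * 3360) hc],
    fun N E hE hEN θ hlarge ↦ ?_⟩
  by_contra hθ
  refine hlarge.not_ge ?_
  calc ‖weylSum N θ‖ ^ 2 ≤ 65 * (N : ℝ) ^ 3 * (#(nearIntPoints N θ) * c) :=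
        norm_sq_weylSum_le_card_nearIntPoints (hE.trans hEN) θ
    _ ≤ 65 * (N : ℝ) ^ 3 * (3360 * (N / E) * c) := by
        gcongr
        exact card_nearIntPoints_le hE hEN hθ
    _ = 65 * 3360 * c * N ^ 4 / E := by ring
    _ ≤ (65 * 3360 * c + 1) * N ^ 4 / E := by gcongr; linarith

end Weyl

/-! ### Orthogonality and Parseval's identity -/

section Parseval

variable {M : ℕ}

lemma coe_fourierChar_natCast_mul (k : ℕ) (t : ℝ) : (𝐞 (k * t) : ℂ) = (𝐞 t : ℂ) ^ k := by
  rw [← nsmul_eq_mul, AddChar.map_nsmul_eq_pow, Circle.coe_pow]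

lemma coe_fourierChar_eq_one_iff {t : ℝ} : (𝐞 t : ℂ) = 1 ↔ ∃ k : ℤ, k = t := by
  refine ⟨fun h ↦ ⟨round t, ?_⟩, fun ⟨k, hk⟩ ↦ hk ▸ coe_fourierChar_intCast k⟩
  have hround := four_mul_abs_sub_round_le t
  rw [h, sub_self, norm_zero] at hround
  linarith [abs_nonpos_iff.1 (show |t - round t| ≤ 0 by linarith)]

lemma sum_range_fourierChar (hM : 0 < M) (m : ℤ) :
    ∑ j ∈ range M, (𝐞 (m * (j / M)) : ℂ) = if (M : ℤ) ∣ m then (M : ℂ) else 0 := by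
  have hM' : (M : ℝ) ≠ 0 := by positivity
  have hpow (j : ℕ) : (𝐞 (m * (j / M)) : ℂ) = (𝐞 (m / M) : ℂ) ^ j := by
    rw [← coe_fourierChar_natCast_mul]
    ring_nf
  simp only [hpow]
  split_ifs with hdvd
  · obtain ⟨k, rfl⟩ := hdvd
    have hone : (𝐞 (((M * k : ℤ) : ℝ) / M) : ℂ) = 1 :=
      coe_fourierChar_eq_one_iff.2 ⟨k, by push_cast; field_simp⟩
    simp only [hone, one_pow, sum_const, card_range, nsmul_eq_mul, mul_one]
  · have hne : (𝐞 (m / M) : ℂ) ≠ 1 := fun h ↦ by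
      obtain ⟨k, hk⟩ := coe_fourierChar_eq_one_iff.1 h
      rw [eq_div_iff hM'] at hk
      exact hdvd (Dvd.intro_left k (by exact_mod_cast hk))
    rw [geom_sum_eq hne, ← coe_fourierChar_natCast_mul, mul_div_cancel₀ _ hM',
      coe_fourierChar_intCast, sub_self, zero_div]

lemma ofReal_norm_sq_sum {ι : Type*} (s : Finset ι) (a : ι → ℂ) :
    ((‖∑ i ∈ s, a i‖ ^ 2 : ℝ) : ℂ) = ∑ i ∈ s, ∑ j ∈ s, a i * conj (a j) := by
  rw [Complex.ofReal_pow, ← Complex.mul_conj', map_sum, sum_mul_sum]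

lemma fourierChar_mul_conj_fourierChar (s t : ℝ) : (𝐞 s : ℂ) * conj (𝐞 t : ℂ) = 𝐞 (s - t) := by
  rw [sub_eq_add_neg, coe_fourierChar_add, coe_fourierChar_neg]

lemma sum_range_norm_sq_sum_mul_fourierChar {ι : Type*} (hM : 0 < M) {s : Finset ι} {ν : ι → ℤ}
    (hν : ∀ i ∈ s, ∀ j ∈ s, (M : ℤ) ∣ ν i - ν j → i = j) (c : ι → ℂ) :
    ∑ j ∈ range M, ‖∑ i ∈ s, c i * 𝐞 (ν i * (j / M))‖ ^ 2 = M * ∑ i ∈ s, ‖c i‖ ^ 2 := by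
  classical
  have hpair : ∀ i ∈ s, ∀ k ∈ s,
      ∑ j ∈ range M, c i * 𝐞 (ν i * (j / M)) * conj (c k * 𝐞 (ν k * (j / M)) : ℂ) =
        if i = k then (M : ℂ) * ‖c i‖ ^ 2 else 0 := by
    intro i hi k hk
    have hterm (j : ℕ) : c i * 𝐞 (ν i * (j / M)) * conj (c k * 𝐞 (ν k * (j / M)) : ℂ) =
        c i * conj (c k) * 𝐞 ((ν i - ν k : ℤ) * (j / M)) := by
      rw [map_mul (starRingEnd ℂ), mul_mul_mul_comm, fourierChar_mul_conj_fourierChar]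
      push_cast
      ring_nf
    simp only [hterm]
    rw [← mul_sum, sum_range_fourierChar hM]
    by_cases hik : i = k
    · rw [hik, sub_self, if_pos (dvd_zero _), if_pos rfl, Complex.mul_conj', mul_comm]
    · rw [if_neg hik, if_neg fun h ↦ hik (hν i hi k hk h), mul_zero]
  apply Complex.ofReal_injective
  rw [Complex.ofReal_sum]
  simp only [ofReal_norm_sq_sum]
  rw [sum_comm]
  simp only [sum_comm (s := range M)]
  rw [sum_congr rfl fun i hi ↦ sum_congr rfl (hpair i hi)]
  push_cast
  rw [mul_sum]
  refine sum_congr rfl fun i hi ↦ ?_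
  rw [sum_ite_eq, if_pos hi]

end Parseval

/-! ### Pairs of frequencies on the major arcs -/

section MajorPairs

variable {N M E H : ℕ} {U V : Finset ℕ} {φ : ℝ}

/-- The exponential sum at `x` with frequencies in `U`. -/
def freqSum (U : Finset ℕ) (x : ℝ) : ℂ := ∑ r ∈ U, 𝐞 (r * x)

lemma norm_freqSum_le (U : Finset ℕ) (x : ℝ) : ‖freqSum U x‖ ≤ #U := by
  refine (norm_sum_le _ _).trans_eq ?_
  simp only [Circle.norm_coe, sum_const, nsmul_eq_mul, mul_one]

lemma norm_freqSum_neg (U : Finset ℕ) (x : ℝ) : ‖freqSum U (-x)‖ = ‖freqSum U x‖ := by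
  rw [← RCLike.norm_conj (freqSum U x)]
  simp only [freqSum, map_sum, mul_neg, coe_fourierChar_neg]

lemma norm_freqSum_mul_natAbs (U : Finset ℕ) (x : ℝ) (k : ℤ) :
    ‖freqSum U (x * k.natAbs)‖ = ‖freqSum U (x * k)‖ := by
  rw [Nat.cast_natAbs, Int.cast_abs]
  rcases abs_choice (k : ℝ) with h | h <;> rw [h]
  rw [mul_neg, norm_freqSum_neg]

lemma ofReal_norm_sq_freqSum (U : Finset ℕ) (x : ℝ) :
    ((‖freqSum U x‖ ^ 2 : ℝ) : ℂ) = ∑ p ∈ U ×ˢ U, (𝐞 ((p.1 - p.2) * x) : ℂ) := by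
  rw [freqSum, ofReal_norm_sq_sum, ← sum_product']
  refine sum_congr rfl fun p _ ↦ ?_
  rw [fourierChar_mul_conj_fourierChar, sub_mul]

lemma sum_norm_sq_freqSum_comm (U V : Finset ℕ) (φ : ℝ) :
    ∑ p ∈ U ×ˢ U, ‖freqSum V (φ * (p.1 - p.2))‖ ^ 2 =
      ∑ q ∈ V ×ˢ V, ‖freqSum U (φ * (q.1 - q.2))‖ ^ 2 := by
  apply Complex.ofReal_injective
  rw [Complex.ofReal_sum, Complex.ofReal_sum]
  simp only [ofReal_norm_sq_freqSum]
  rw [sum_comm]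
  refine sum_congr rfl fun q _ ↦ sum_congr rfl fun p _ ↦ ?_
  ring_nf

lemma sum_range_norm_sq_freqSum (hM : 0 < M) (hU : U ⊆ range M) :
    ∑ m ∈ range M, ‖freqSum U (m / M)‖ ^ 2 = M * #U := by
  have hν : ∀ r ∈ U, ∀ s ∈ U, (M : ℤ) ∣ (r : ℤ) - s → r = s := fun r hr s hs hdvd ↦ by
    have hr' := mem_range.1 (hU hr)
    have hs' := mem_range.1 (hU hs)
    have := Int.eq_zero_of_abs_lt_dvd hdvd (abs_lt.2 ⟨by omega, by omega⟩)
    omega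
  simpa [freqSum] using sum_range_norm_sq_sum_mul_fourierChar hM hν fun _ ↦ 1

lemma half_le_norm_freqSum_range (h : (H : ℝ) * |φ - round φ| ≤ 1 / 16) :
    (H : ℝ) / 2 ≤ ‖freqSum (range H) φ‖ := by
  set ψ := φ - round φ
  have hψ : freqSum (range H) φ = ∑ k ∈ range H, (𝐞 (k * ψ) : ℂ) := by
    refine sum_congr rfl fun k _ ↦ ?_
    rw [coe_fourierChar_natCast_mul, coe_fourierChar_natCast_mul, coe_fourierChar_sub_intCast]
  have hterm : ∀ k ∈ range H, ‖(𝐞 (k * ψ) : ℂ) - 1‖ ≤ 1 / 2 := by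
    intro k hk
    have hk' : (k : ℝ) ≤ H := by exact_mod_cast (mem_range.1 hk).le
    calc ‖(𝐞 (k * ψ) : ℂ) - 1‖ = 2 * |Real.sin (Real.pi * (k * ψ))| :=
          norm_coe_fourierChar_sub_one _
      _ ≤ 2 * |Real.pi * (k * ψ)| := by gcongr 2 * ?_; exact Real.abs_sin_le_abs
      _ = 2 * (Real.pi * (k * |ψ|)) := by
          rw [abs_mul, abs_mul, abs_of_pos Real.pi_pos, Nat.abs_cast]
      _ ≤ 2 * (4 * (1 / 16)) := by
          gcongr
          exacts [Real.pi_lt_four.le, le_trans (by gcongr) h]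
      _ = 1 / 2 := by norm_num
  have hdist : ‖(H : ℂ) - freqSum (range H) φ‖ ≤ H / 2 := by
    have : (H : ℂ) - freqSum (range H) φ = -∑ k ∈ range H, ((𝐞 (k * ψ) : ℂ) - 1) := by
      rw [hψ, sum_sub_distrib, sum_const, card_range, nsmul_eq_mul, mul_one, neg_sub]
    rw [this, norm_neg]
    refine (norm_sum_le _ _).trans ((sum_le_card_nsmul _ _ _ hterm).trans_eq ?_)
    rw [card_range, nsmul_eq_mul, mul_one_div]
  have htriangle := norm_sub_norm_le (H : ℂ) (freqSum (range H) φ)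
  rw [Complex.norm_natCast] at htriangle
  linarith

lemma sum_natAbs_sub_le (H : ℕ) {g : ℕ → ℝ} (hg : ∀ k, 0 ≤ g k) :
    ∑ p ∈ range H ×ˢ range H, g ((p.1 : ℤ) - p.2).natAbs ≤ 2 * H * ∑ k ∈ range H, g k := by
  have hfibre (k : ℕ) :
      #{p ∈ range H ×ˢ range H | ((p.1 : ℤ) - p.2).natAbs = k} ≤ 2 * H := by
    have hsub : {p ∈ range H ×ˢ range H | ((p.1 : ℤ) - p.2).natAbs = k} ⊆
        (range H).image (fun h ↦ (h, h + k)) ∪ (range H).image (fun h ↦ (h + k, h)) := by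
      rintro ⟨h, h'⟩ hp
      simp only [mem_filter, mem_product, mem_union, mem_image, mem_range, Prod.mk.injEq] at hp ⊢
      rcases le_total h h' with hle | hle
      · exact Or.inl ⟨h, hp.1.1, rfl, by omega⟩
      · exact Or.inr ⟨h', hp.1.2, by omega, rfl⟩
    refine (card_le_card hsub).trans ((card_union_le _ _).trans ?_)
    rw [two_mul]
    exact add_le_add (card_image_le.trans_eq (card_range H)) (card_image_le.trans_eq (card_range H))
  have hmaps : ∀ p ∈ range H ×ˢ range H, ((p.1 : ℤ) - p.2).natAbs ∈ range H := fun p hp ↦ by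
    simp only [mem_product, mem_range] at hp ⊢
    omega
  exact_mod_cast sum_comp_le_mul_sum (fun k _ ↦ hg k) hmaps fun k _ ↦ hfibre k

lemma sum_multiples_le {q : ℕ} (hq : q ∈ Icc 1 E) {G : ℕ → ℝ} (hG : ∀ m, 0 ≤ G m) :
    ∑ k ∈ range H, G (k * q) ≤ G 0 + ∑ m ∈ Icc 1 (H * E) with q ∣ m, G m := by
  rw [mem_Icc] at hq
  have hinj : Set.InjOn (fun k ↦ k * q) (range H) := fun a _ b _ hab ↦
    Nat.eq_of_mul_eq_mul_right (by omega) hab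
  have hnotMem : 0 ∉ {m ∈ Icc 1 (H * E) | q ∣ m} := by
    simp only [mem_filter, mem_Icc, nonpos_iff_eq_zero, one_ne_zero, false_and, not_false_eq_true]
  rw [← sum_image hinj, ← sum_insert hnotMem]
  refine sum_le_sum_of_subset_of_nonneg (fun m hm ↦ ?_) fun m _ _ ↦ hG m
  obtain ⟨k, hk, rfl⟩ := mem_image.1 hm
  rcases Nat.eq_zero_or_pos k with rfl | hk0
  · simp only [zero_mul, mem_insert_self]
  · exact mem_insert_of_mem (mem_filter.2 ⟨mem_Icc.2 ⟨Nat.mul_pos hk0 hq.1,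
      Nat.mul_le_mul (mem_range.1 hk).le hq.2⟩, Dvd.intro_left k rfl⟩)

lemma sum_sum_multiples_le (E H : ℕ) {G : ℕ → ℝ} (hG : ∀ m, 0 ≤ G m) :
    ∑ q ∈ Icc 1 E, ∑ k ∈ range H, G (k * q) ≤
      E * G 0 + ∑ m ∈ Icc 1 (H * E), divisorCountLE E m * G m := by
  calc ∑ q ∈ Icc 1 E, ∑ k ∈ range H, G (k * q)
      ≤ ∑ q ∈ Icc 1 E, (G 0 + ∑ m ∈ Icc 1 (H * E) with q ∣ m, G m) :=
        sum_le_sum fun q hq ↦ sum_multiples_le hq hG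
    _ = E * G 0 + ∑ m ∈ Icc 1 (H * E), ∑ q ∈ Icc 1 E with q ∣ m, G m := by
        simp only [sum_filter]
        rw [sum_add_distrib, sum_const, Nat.card_Icc, Nat.add_sub_cancel, nsmul_eq_mul, sum_comm]
    _ = E * G 0 + ∑ m ∈ Icc 1 (H * E), divisorCountLE E m * G m := by
        simp only [sum_const, nsmul_eq_mul, divisorCountLE]

open Classical in
/-- The pairs in `U` whose difference, divided by the modulus `M`, lies on a major arc. -/
def majorPairs (N M E : ℕ) (U : Finset ℕ) : Finset (ℕ × ℕ) :=
  {p ∈ U ×ˢ U | InMajorArc N E ((p.1 - p.2) / M)}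

lemma mem_majorPairs {p : ℕ × ℕ} :
    p ∈ majorPairs N M E U ↔ p ∈ U ×ˢ U ∧ InMajorArc N E ((p.1 - p.2) / M) := by
  classical exact mem_filter

lemma sq_div_four_le_sum_of_mem_majorPairs (hN : 0 < N) (hHE : 16 * (H * E) ≤ N ^ 2) {p : ℕ × ℕ}
    (hp : p ∈ majorPairs N M E U) :
    (H : ℝ) ^ 2 / 4 ≤ ∑ q ∈ Icc 1 E, ‖freqSum (range H) (q / M * (p.1 - p.2))‖ ^ 2 := by
  obtain ⟨q, hq, hnear⟩ := (mem_majorPairs.1 hp).2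
  rw [← mul_comm_div] at hnear
  have hHE' : (16 * (H * E) : ℝ) ≤ N ^ 2 := by exact_mod_cast hHE
  set φ : ℝ := q / M * (p.1 - p.2)
  have hsmall : (H : ℝ) * |φ - (round φ : ℝ)| ≤ 1 / 16 := by
    refine (mul_le_mul_of_nonneg_left hnear (Nat.cast_nonneg H)).trans ?_
    rw [mul_div_assoc', div_le_div_iff₀ (by positivity) (by norm_num)]
    linarith
  calc (H : ℝ) ^ 2 / 4 = (H / 2) ^ 2 := by ring
    _ ≤ ‖freqSum (range H) φ‖ ^ 2 := by
        gcongr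
        exact half_le_norm_freqSum_range hsmall
    _ ≤ ∑ q ∈ Icc 1 E, ‖freqSum (range H) (q / M * (p.1 - p.2))‖ ^ 2 :=
        single_le_sum (f := fun q : ℕ ↦ ‖freqSum (range H) (q / M * (p.1 - p.2))‖ ^ 2)
          (fun q _ ↦ by positivity) hq

lemma sum_sum_norm_sq_freqSum_le (M E H : ℕ) (U : Finset ℕ) :
    ∑ p ∈ U ×ˢ U, ∑ q ∈ Icc 1 E, ‖freqSum (range H) (q / M * (p.1 - p.2))‖ ^ 2 ≤
      2 * H * (E * (#U : ℝ) ^ 2 +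
        ∑ m ∈ Icc 1 (H * E), divisorCountLE E m * ‖freqSum U (m / M)‖ ^ 2) := by
  have hdiff (q : ℕ) : ∑ p ∈ U ×ˢ U, ‖freqSum (range H) (q / M * (p.1 - p.2))‖ ^ 2 ≤
      2 * H * ∑ k ∈ range H, ‖freqSum U ((k * q : ℕ) / M)‖ ^ 2 := by
    rw [sum_norm_sq_freqSum_comm]
    have hnatAbs (h : ℕ × ℕ) : ‖freqSum U (q / M * (h.1 - h.2))‖ ^ 2 =
        ‖freqSum U ((((h.1 : ℤ) - h.2).natAbs * q : ℕ) / M)‖ ^ 2 := by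
      rw [Nat.cast_mul, mul_comm _ (q : ℝ), mul_div_right_comm, norm_freqSum_mul_natAbs]
      push_cast
      rfl
    simp only [hnatAbs]
    exact sum_natAbs_sub_le H (g := fun k ↦ ‖freqSum U ((k * q : ℕ) / M)‖ ^ 2)
      fun k ↦ by positivity
  rw [sum_comm]
  calc ∑ q ∈ Icc 1 E, ∑ p ∈ U ×ˢ U, ‖freqSum (range H) (q / M * (p.1 - p.2))‖ ^ 2
      ≤ 2 * H * ∑ q ∈ Icc 1 E, ∑ k ∈ range H, ‖freqSum U ((k * q : ℕ) / M)‖ ^ 2 := by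
        rw [mul_sum]
        exact sum_le_sum fun q _ ↦ hdiff q
    _ ≤ 2 * H * (E * ‖freqSum U ((0 : ℕ) / M)‖ ^ 2 +
          ∑ m ∈ Icc 1 (H * E), divisorCountLE E m * ‖freqSum U (m / M)‖ ^ 2) := by
        gcongr
        exact sum_sum_multiples_le E H (G := fun m ↦ ‖freqSum U (m / M)‖ ^ 2)
          fun m ↦ by positivity
    _ ≤ 2 * H * (E * (#U : ℝ) ^ 2 +
          ∑ m ∈ Icc 1 (H * E), divisorCountLE E m * ‖freqSum U (m / M)‖ ^ 2) := by
        gcongr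
        exact norm_freqSum_le U _

lemma card_majorPairs_le (hN : 0 < N) (hH : 0 < H) (hHE : 16 * (H * E) ≤ N ^ 2) (U : Finset ℕ) :
    (#(majorPairs N M E U) : ℝ) ≤ 8 / H * (E * (#U : ℝ) ^ 2 +
      ∑ m ∈ Icc 1 (H * E), divisorCountLE E m * ‖freqSum U (m / M)‖ ^ 2) := by
  set Q : ℝ := E * (#U : ℝ) ^ 2 +
    ∑ m ∈ Icc 1 (H * E), divisorCountLE E m * ‖freqSum U (m / M)‖ ^ 2
  have hcount : (#(majorPairs N M E U) : ℝ) * (H ^ 2 / 4) ≤ 2 * H * Q := by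
    calc (#(majorPairs N M E U) : ℝ) * (H ^ 2 / 4)
        ≤ ∑ p ∈ majorPairs N M E U, ∑ q ∈ Icc 1 E,
            ‖freqSum (range H) (q / M * (p.1 - p.2))‖ ^ 2 := by
          rw [← nsmul_eq_mul]
          exact card_nsmul_le_sum _ _ _ fun p hp ↦ sq_div_four_le_sum_of_mem_majorPairs hN hHE hp
      _ ≤ ∑ p ∈ U ×ˢ U, ∑ q ∈ Icc 1 E, ‖freqSum (range H) (q / M * (p.1 - p.2))‖ ^ 2 :=
          sum_le_sum_of_subset_of_nonneg (fun p hp ↦ (mem_majorPairs.1 hp).1)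
            fun p _ _ ↦ by positivity
      _ ≤ 2 * H * Q := sum_sum_norm_sq_freqSum_le M E H U
  rw [← le_div_iff₀ (by positivity)] at hcount
  refine hcount.trans_eq ?_
  field_simp
  ring

lemma le_add_pow_succ_div_pow {d T : ℝ} (hd : 0 ≤ d) (hT : 0 < T) (B : ℕ) :
    d ≤ T + d ^ (B + 1) / T ^ B := by
  rcases le_total d T with h | h
  · exact h.trans (le_add_of_nonneg_right (by positivity))
  · refine le_add_of_nonneg_of_le hT.le ?_
    rw [le_div_iff₀ (by positivity), pow_succ']
    gcongr

lemma sum_divisorCountLE_mul_norm_sq_freqSum_le {X : ℕ} (hX : X < M) (hU : U ⊆ range M) (E B : ℕ)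
    {T : ℝ} (hT : 0 < T) :
    ∑ m ∈ Icc 1 X, divisorCountLE E m * ‖freqSum U (m / M)‖ ^ 2 ≤
      T * (M * #U) + (#U : ℝ) ^ 2 / T ^ B * ∑ m ∈ Icc 1 X, (divisorCountLE E m : ℝ) ^ (B + 1) := by
  have hterm (m : ℕ) : divisorCountLE E m * ‖freqSum U (m / M)‖ ^ 2 ≤
      T * ‖freqSum U (m / M)‖ ^ 2 +
        (#U : ℝ) ^ 2 / T ^ B * (divisorCountLE E m : ℝ) ^ (B + 1) := by
    calc divisorCountLE E m * ‖freqSum U (m / M)‖ ^ 2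
        ≤ (T + (divisorCountLE E m : ℝ) ^ (B + 1) / T ^ B) * ‖freqSum U (m / M)‖ ^ 2 := by
          gcongr
          exact le_add_pow_succ_div_pow (Nat.cast_nonneg _) hT B
      _ ≤ T * ‖freqSum U (m / M)‖ ^ 2 +
            (divisorCountLE E m : ℝ) ^ (B + 1) / T ^ B * (#U : ℝ) ^ 2 := by
          rw [add_mul]
          gcongr
          exact norm_freqSum_le U _
      _ = T * ‖freqSum U (m / M)‖ ^ 2 +
            (#U : ℝ) ^ 2 / T ^ B * (divisorCountLE E m : ℝ) ^ (B + 1) := by ring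
  refine (sum_le_sum fun m _ ↦ hterm m).trans ?_
  rw [sum_add_distrib, ← mul_sum, ← mul_sum, ← sum_range_norm_sq_freqSum (by omega) hU]
  gcongr
  intro m hm
  exact mem_range.2 ((mem_Icc.1 hm).2.trans_lt hX)

lemma exists_card_majorPairs_le (B : ℕ) {τ : ℝ} (hτ : 0 < τ) : ∃ C : ℝ, 1 ≤ C ∧
    ∀ N E : ℕ, 1 ≤ E → 16 * E ≤ N ^ 2 → ∀ U ⊆ range (20 * N ^ 2), ∀ T : ℝ, 0 < T →
      (#(majorPairs N (20 * N ^ 2) E U) : ℝ) ≤ C * E * (E * (#U : ℝ) ^ 2 / N ^ 2 + T * #U +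
        (#U : ℝ) ^ 2 * (E : ℝ) ^ τ / T ^ B) := by
  obtain ⟨C, hC, hmoment⟩ := exists_sum_divisorCountLE_pow_le (B + 1) hτ
  refine ⟨256 * (20 + C), by linarith, fun N E hE hEN U hU T hT ↦ ?_⟩
  have hN : 0 < N := Nat.pos_of_ne_zero (by rintro rfl; omega)
  set H := N ^ 2 / (16 * E)
  have hH : 0 < H := Nat.div_pos hEN (by omega)
  have hHE : 16 * (H * E) ≤ N ^ 2 := by
    calc 16 * (H * E) = H * (16 * E) := by ring
      _ ≤ N ^ 2 := Nat.div_mul_le_self _ _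
  have hHE' : ((H * E : ℕ) : ℝ) ≤ N ^ 2 := by exact_mod_cast (by omega : H * E ≤ N ^ 2)
  have hHlarge : 8 / (H : ℝ) ≤ 256 * E / N ^ 2 := by
    have : N ^ 2 ≤ 32 * (H * E) := by
      have hlt : N ^ 2 < H * (16 * E) + 16 * E := Nat.lt_div_mul_add (by omega)
      nlinarith
    have : (N : ℝ) ^ 2 ≤ 32 * (H * E) := by exact_mod_cast this
    rw [div_le_div_iff₀ (by positivity) (by positivity)]
    linarith
  calc (#(majorPairs N (20 * N ^ 2) E U) : ℝ) ≤ _ := card_majorPairs_le hN hH hHE U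
    _ ≤ 256 * E / N ^ 2 * (E * (#U : ℝ) ^ 2 + (T * ((20 * N ^ 2 : ℕ) * #U) +
          (#U : ℝ) ^ 2 / T ^ B * (C * N ^ 2 * (E : ℝ) ^ τ))) := by
        gcongr
        refine (sum_divisorCountLE_mul_norm_sq_freqSum_le (by nlinarith) hU E B hT).trans ?_
        gcongr
        exact (hmoment E (H * E) hE).trans (by gcongr)
    _ = 256 * E * (1 * (E * (#U : ℝ) ^ 2 / N ^ 2) + 20 * (T * #U) +
          C * ((#U : ℝ) ^ 2 * (E : ℝ) ^ τ / T ^ B)) := by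
        push_cast
        field_simp
        ring
    _ ≤ 256 * E * ((20 + C) * (E * (#U : ℝ) ^ 2 / N ^ 2) + (20 + C) * (T * #U) +
          (20 + C) * ((#U : ℝ) ^ 2 * (E : ℝ) ^ τ / T ^ B)) := by
        gcongr <;> linarith
    _ = 256 * (20 + C) * E * (E * (#U : ℝ) ^ 2 / N ^ 2 + T * #U +
          (#U : ℝ) ^ 2 * (E : ℝ) ^ τ / T ^ B) := by ring

end MajorPairs

/-! ### Level sets of quadratic exponential sums -/

section Duality

variable {ι : Type*}

/-- The exponential sum `∑ f(x) e(x²θ)` over `|x| ≤ N`. -/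
def quadSum (N : ℕ) (f : ℤ → ℂ) (θ : ℝ) : ℂ := ∑ x ∈ Icc (-(N : ℤ)) N, f x * 𝐞 ((x : ℝ) ^ 2 * θ)

lemma sq_sum_norm_quadSum_le_mul (N : ℕ) (f : ℤ → ℂ) (U : Finset ι) (φ : ι → ℝ) :
    ∃ η : ι → ℂ, (∀ r, ‖η r‖ = 1) ∧ (∑ r ∈ U, ‖quadSum N f (φ r)‖) ^ 2 ≤
      (∑ x ∈ Icc (-(N : ℤ)) N, ‖f x‖ ^ 2) *
        ∑ x ∈ Icc (-(N : ℤ)) N, ‖∑ r ∈ U, η r * 𝐞 ((x : ℝ) ^ 2 * φ r)‖ ^ 2 := by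
  choose η hη hphase using fun r ↦ RCLike.exists_norm_eq_mul_self (quadSum N f (φ r))
  set G : ℤ → ℂ := fun x ↦ ∑ r ∈ U, η r * 𝐞 ((x : ℝ) ^ 2 * φ r) with hG
  have hswap : ((∑ r ∈ U, ‖quadSum N f (φ r)‖ : ℝ) : ℂ) = ∑ x ∈ Icc (-(N : ℤ)) N, f x * G x := by
    have hphase' (r : ι) : (‖quadSum N f (φ r)‖ : ℂ) = η r * quadSum N f (φ r) := hphase r
    push_cast
    rw [sum_congr rfl fun r _ ↦ hphase' r]
    simp only [quadSum, hG, mul_sum]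
    rw [sum_comm]
    exact sum_congr rfl fun x _ ↦ sum_congr rfl fun r _ ↦ mul_left_comm _ _ _
  have hnorm : ∑ r ∈ U, ‖quadSum N f (φ r)‖ ≤ ∑ x ∈ Icc (-(N : ℤ)) N, ‖f x‖ * ‖G x‖ := by
    rw [← Complex.norm_of_nonneg (sum_nonneg fun r _ ↦ norm_nonneg _), hswap]
    exact norm_sum_le_of_le _ fun x _ ↦ (norm_mul _ _).le
  refine ⟨η, hη, le_trans ?_ (sum_mul_sq_le_sq_mul_sq _ _ _)⟩
  gcongr

lemma ofReal_sum_tent_mul_norm_sq (N : ℕ) (U : Finset ι) (φ : ι → ℝ) (η : ι → ℂ) :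
    ((∑ x ∈ Icc (-(2 * N : ℤ)) (2 * N),
        tent N x * ‖∑ r ∈ U, η r * 𝐞 ((x : ℝ) ^ 2 * φ r)‖ ^ 2 : ℝ) : ℂ) =
      ∑ r ∈ U, ∑ s ∈ U, η r * conj (η s) * weylSum N (φ r - φ s) := by
  simp only [weylSum, mul_sum]
  rw [Complex.ofReal_sum, sum_congr rfl fun r _ ↦ sum_comm, sum_comm]
  refine sum_congr rfl fun x _ ↦ ?_
  rw [Complex.ofReal_mul, ofReal_norm_sq_sum, mul_sum]
  refine sum_congr rfl fun r _ ↦ ?_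
  rw [mul_sum]
  refine sum_congr rfl fun s _ ↦ ?_
  rw [mul_sub, ← fourierChar_mul_conj_fourierChar, map_mul conj, Complex.ofReal_intCast]
  ring

lemma mul_sum_norm_sq_le_sum_norm_weylSum (N : ℕ) (U : Finset ι) (φ : ι → ℝ) {η : ι → ℂ}
    (hη : ∀ r, ‖η r‖ = 1) :
    N * ∑ x ∈ Icc (-(N : ℤ)) N, ‖∑ r ∈ U, η r * 𝐞 ((x : ℝ) ^ 2 * φ r)‖ ^ 2 ≤
      ∑ r ∈ U, ∑ s ∈ U, ‖weylSum N (φ r - φ s)‖ := by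
  set G : ℤ → ℂ := fun x ↦ ∑ r ∈ U, η r * 𝐞 ((x : ℝ) ^ 2 * φ r)
  have hnonneg (x : ℤ) : 0 ≤ tent N x * ‖G x‖ ^ 2 :=
    mul_nonneg (by exact_mod_cast tent_nonneg N x) (by positivity)
  calc N * ∑ x ∈ Icc (-(N : ℤ)) N, ‖G x‖ ^ 2
      ≤ ∑ x ∈ Icc (-(N : ℤ)) N, tent N x * ‖G x‖ ^ 2 := by
        rw [mul_sum]
        refine sum_le_sum fun x hx ↦ ?_
        gcongr
        exact_mod_cast le_tent (abs_le.2 (mem_Icc.1 hx))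
    _ ≤ ∑ x ∈ Icc (-(2 * N : ℤ)) (2 * N), tent N x * ‖G x‖ ^ 2 :=
        sum_le_sum_of_subset_of_nonneg (Icc_subset_Icc (by omega) (by omega))
          fun x _ _ ↦ hnonneg x
    _ = ‖∑ r ∈ U, ∑ s ∈ U, η r * conj (η s) * weylSum N (φ r - φ s)‖ := by
        rw [← ofReal_sum_tent_mul_norm_sq,
          Complex.norm_of_nonneg (sum_nonneg fun x _ ↦ hnonneg x)]
    _ ≤ ∑ r ∈ U, ∑ s ∈ U, ‖weylSum N (φ r - φ s)‖ :=
        norm_sum_le_of_le _ fun r _ ↦ norm_sum_le_of_le _ fun s _ ↦ by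
          rw [norm_mul, norm_mul, RCLike.norm_conj, hη, hη, one_mul, one_mul]

lemma sq_sum_norm_quadSum_le {N : ℕ} {f : ℤ → ℂ} (hf : ∑ x ∈ Icc (-(N : ℤ)) N, ‖f x‖ ^ 2 ≤ N)
    (U : Finset ι) (φ : ι → ℝ) :
    (∑ r ∈ U, ‖quadSum N f (φ r)‖) ^ 2 ≤ ∑ p ∈ U ×ˢ U, ‖weylSum N (φ p.1 - φ p.2)‖ := by
  obtain ⟨η, hη, hle⟩ := sq_sum_norm_quadSum_le_mul N f U φ
  rw [sum_product]
  exact (hle.trans (by gcongr)).trans (mul_sum_norm_sq_le_sum_norm_weylSum N U φ hη)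

end Duality

section LevelSet

lemma le_add_sum_range_ite {φ : ℝ} {b : ℕ → ℝ} {P : ℕ → Prop} [DecidablePred P]
    (hb : ∀ i, 0 ≤ b i) (h0 : φ ≤ b 0) (I : ℕ) (h : ∀ i < I, ¬ P i → φ ≤ b (i + 1)) :
    φ ≤ b I + ∑ i ∈ range I, if P i then b i else 0 := by
  induction I with
  | zero => simpa using h0
  | succ I ih =>
    have ih := ih fun i hi ↦ h i (by omega)
    have hsum : 0 ≤ ∑ i ∈ range I, if P i then b i else 0 :=
      sum_nonneg fun i _ ↦ by split_ifs <;> simp [hb i]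
    rw [sum_range_succ]
    by_cases hP : P I
    · rw [if_pos hP]
      linarith [hb (I + 1)]
    · rw [if_neg hP]
      linarith [h I (by omega) hP]

open Classical in
lemma exists_norm_weylSum_le_sum_layers : ∃ c : ℕ, 1 ≤ c ∧ ∀ N I : ℕ, 1 ≤ N →
    (∀ i < I, c * 4 ^ i ≤ N) → ∀ θ : ℝ, ‖weylSum N θ‖ ≤ N ^ 2 * (10 / 2 ^ I +
      ∑ i ∈ range I, if InMajorArc N (c * 4 ^ i) θ then 10 / 2 ^ i else 0) := by
  obtain ⟨C, hC, hinverse⟩ := exists_inMajorArc_of_lt_norm_sq_weylSum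
  obtain ⟨c, hc⟩ := exists_nat_ge C
  have hc1 : 1 ≤ c := by exact_mod_cast hC.trans hc
  refine ⟨c, hc1, fun N I hN hI θ ↦ ?_⟩
  rw [← div_le_iff₀' (by positivity)]
  refine le_add_sum_range_ite (b := fun i ↦ 10 / 2 ^ i) (fun i ↦ by positivity) ?_ I
    fun i hi ↦ not_imp_comm.1 fun hlarge ↦ ?_
  · rw [pow_zero, div_one, div_le_iff₀ (by positivity)]
    exact norm_weylSum_le hN θ
  · refine hinverse N (c * 4 ^ i) (Nat.mul_pos hc1 (by positivity)) (hI i hi) θ ?_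
    rw [not_le, lt_div_iff₀ (by positivity)] at hlarge
    calc C * (N : ℝ) ^ 4 / (c * 4 ^ i : ℕ) ≤ 25 * N ^ 4 / 4 ^ i := by
          push_cast
          rw [div_le_div_iff₀ (by positivity) (by positivity)]
          have : C * (N ^ 4 * 4 ^ i) ≤ 25 * c * ((N : ℝ) ^ 4 * 4 ^ i) := by gcongr; linarith
          linarith
      _ = (10 / 2 ^ (i + 1) * (N : ℝ) ^ 2) ^ 2 := by
          rw [show (4 : ℝ) ^ i = (2 ^ i) ^ 2 by rw [← pow_mul, mul_comm, pow_mul]; norm_num]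
          field_simp
          ring
      _ < ‖weylSum N θ‖ ^ 2 := by gcongr

lemma exists_sum_norm_weylSum_le : ∃ c : ℕ, 1 ≤ c ∧ ∀ N I : ℕ, 1 ≤ N →
    (∀ i < I, c * 4 ^ i ≤ N) → ∀ (M : ℕ) (U : Finset ℕ),
    ∑ p ∈ U ×ˢ U, ‖weylSum N ((p.1 - p.2) / M)‖ ≤ N ^ 2 * (10 / 2 ^ I * (#U : ℝ) ^ 2 +
      ∑ i ∈ range I, 10 / 2 ^ i * (#(majorPairs N M (c * 4 ^ i) U) : ℝ)) := by
  classical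
  obtain ⟨c, hc, hlayers⟩ := exists_norm_weylSum_le_sum_layers
  refine ⟨c, hc, fun N I hN hI M U ↦ (sum_le_sum fun p _ ↦ hlayers N I hN hI _).trans_eq ?_⟩
  rw [← mul_sum, sum_add_distrib, sum_const, card_product, nsmul_eq_mul, sum_comm]
  push_cast
  rw [← sq, mul_comm ((#U : ℝ) ^ 2)]
  congr 2
  refine sum_congr rfl fun i _ ↦ ?_
  rw [← sum_filter, sum_const, nsmul_eq_mul, mul_comm, majorPairs]

open Classical in
/-- The multiples `j / (20N²)` in `[0, 1)`, indexed by `j`, at which `|quadSum N f| ≥ βN`. -/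
def levelSet (N : ℕ) (f : ℤ → ℂ) (β : ℝ) : Finset ℕ :=
  {j ∈ range (20 * N ^ 2) | β * N ≤ ‖quadSum N f (j / (20 * N ^ 2 : ℕ))‖}

lemma card_levelSet_sq_mul_le {N : ℕ} {f : ℤ → ℂ} {β : ℝ} (hβ : 0 ≤ β)
    (hf : ∑ x ∈ Icc (-(N : ℤ)) N, ‖f x‖ ^ 2 ≤ N) :
    (#(levelSet N f β) * (β * N)) ^ 2 ≤ ∑ p ∈ levelSet N f β ×ˢ levelSet N f β,
      ‖weylSum N ((p.1 - p.2) / (20 * N ^ 2 : ℕ))‖ := by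
  classical
  set U := levelSet N f β with hU
  calc (#U * (β * N)) ^ 2 ≤ (∑ j ∈ U, ‖quadSum N f (j / (20 * N ^ 2 : ℕ))‖) ^ 2 := by
        gcongr
        rw [← nsmul_eq_mul]
        exact card_nsmul_le_sum _ _ _ fun j hj ↦ (mem_filter.1 hj).2
    _ ≤ ∑ p ∈ U ×ˢ U, ‖weylSum N ((p.1 - p.2) / (20 * N ^ 2 : ℕ))‖ := by
        simp only [sub_div]
        exact sq_sum_norm_quadSum_le hf U _

lemma exists_sum_layers_card_majorPairs_le (c : ℕ) (hc : 1 ≤ c) : ∃ C : ℝ, 1 ≤ C ∧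
    ∀ (N I : ℕ) (D : ℝ), 0 ≤ D → 16 * D ≤ N → (∀ i < I, (c * 4 ^ i : ℝ) ≤ D) →
    ∀ U ⊆ range (20 * N ^ 2), ∀ T : ℝ, 0 < T →
      ∑ i ∈ range I, 10 / 2 ^ i * (#(majorPairs N (20 * N ^ 2) (c * 4 ^ i) U) : ℝ) ≤
        C * 2 ^ I * (D * (#U : ℝ) ^ 2 / N ^ 2 + T * #U +
          (#U : ℝ) ^ 2 * D ^ (1 / 4 : ℝ) / T ^ 10) := by
  obtain ⟨C, hC, hpairs⟩ := exists_card_majorPairs_le 10 (τ := 1 / 4) (by norm_num)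
  have hc' : (1 : ℝ) ≤ c := by exact_mod_cast hc
  refine ⟨10 * C * c, by nlinarith, fun N I D hD0 hDN hD U hU T hT ↦ ?_⟩
  set X := D * (#U : ℝ) ^ 2 / N ^ 2 + T * #U + (#U : ℝ) ^ 2 * D ^ (1 / 4 : ℝ) / T ^ 10 with hX
  have hlayer : ∀ i ∈ range I,
      (#(majorPairs N (20 * N ^ 2) (c * 4 ^ i) U) : ℝ) ≤ C * (c * 4 ^ i) * X := fun i hi ↦ by
    have hED := hD i (mem_range.1 hi)
    have hEN : 16 * (c * 4 ^ i) ≤ N ^ 2 := by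
      have : 16 * (c * 4 ^ i) ≤ N := by
        have : (16 * (c * 4 ^ i) : ℝ) ≤ N := by linarith
        exact_mod_cast this
      nlinarith
    refine (hpairs N _ (Nat.mul_pos hc (by positivity)) hEN U hU T hT).trans ?_
    push_cast
    rw [hX]
    gcongr
  calc ∑ i ∈ range I, 10 / 2 ^ i * (#(majorPairs N (20 * N ^ 2) (c * 4 ^ i) U) : ℝ)
      ≤ ∑ i ∈ range I, 10 * C * c * X * 2 ^ i := by
        refine sum_le_sum fun i hi ↦ ?_
        calc 10 / 2 ^ i * (#(majorPairs N (20 * N ^ 2) (c * 4 ^ i) U) : ℝ)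
            ≤ 10 / 2 ^ i * (C * (c * 4 ^ i) * X) := by
              gcongr
              exact hlayer i hi
          _ = 10 * C * c * X * 2 ^ i := by
              rw [show (4 : ℝ) ^ i = 2 ^ i * 2 ^ i by rw [← mul_pow]; norm_num]
              field_simp
    _ = 10 * C * c * X * (2 ^ I - 1) := by
        rw [← mul_sum, geom_sum_eq (by norm_num)]
        norm_num
    _ ≤ 10 * C * c * X * 2 ^ I := by
        gcongr
        linarith
    _ = 10 * C * c * 2 ^ I * X := by ring

lemma exists_two_pow_mem_Icc {β : ℝ} (hβ : 0 < β) (hβ1 : β ≤ 1) :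
    ∃ I : ℕ, 20 / β ^ 2 ≤ 2 ^ I ∧ 2 ^ I ≤ 40 / β ^ 2 := by
  have h1 : (1 : ℝ) ≤ 20 / β ^ 2 := by
    rw [le_div_iff₀ (by positivity)]
    have : β ^ 2 ≤ 1 := pow_le_one₀ hβ.le hβ1
    linarith
  obtain ⟨n, hn, hn'⟩ := exists_nat_pow_near h1 (one_lt_two : (1 : ℝ) < 2)
  refine ⟨n + 1, hn'.le, ?_⟩
  rw [pow_succ]
  linarith [show 40 / β ^ 2 = 20 / β ^ 2 * 2 by ring]

lemma rpow_quarter_div_pow_four_le {a β : ℝ} (ha : 1 ≤ a) (hβ : 0 < β) :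
    (a / β ^ 4) ^ (1 / 4 : ℝ) ≤ a / β := by
  calc (a / β ^ 4) ^ (1 / 4 : ℝ) ≤ ((a / β) ^ 4) ^ (1 / 4 : ℝ) := by
        rw [div_pow]
        gcongr
        exact le_self_pow₀ ha (by norm_num)
    _ = a / β := by
        rw [one_div]
        exact_mod_cast Real.pow_rpow_inv_natCast (n := 4) (by positivity) (by norm_num)

lemma mul_four_pow_le_div_pow_four {c β : ℝ} {I i : ℕ} (hc : 0 ≤ c)
    (hI : (2 : ℝ) ^ I ≤ 40 / β ^ 2) (hi : i < I) : c * 4 ^ i ≤ 400 * c / β ^ 4 := by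
  calc c * 4 ^ i = c * (2 ^ (i + 1)) ^ 2 / 4 := by
        rw [show (4 : ℝ) ^ i = 2 ^ i * 2 ^ i by rw [← mul_pow]; norm_num]
        ring
    _ ≤ c * (40 / β ^ 2) ^ 2 / 4 := by
        gcongr
        exact (pow_le_pow_right₀ one_le_two hi).trans hI
    _ = 400 * c / β ^ 4 := by ring

lemma exists_sum_layers_card_majorPairs_le_of_two_pow_le {c : ℕ} (hc : 1 ≤ c) :
    ∃ C : ℝ, 1 ≤ C ∧ ∀ N I : ℕ, ∀ β : ℝ, 0 < β → 2 ^ I ≤ 40 / β ^ 2 → 16 * (400 * c / β ^ 4) ≤ N →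
    ∀ U ⊆ range (20 * N ^ 2), ∀ T : ℝ, 0 < T →
      ∑ i ∈ range I, 10 / 2 ^ i * (#(majorPairs N (20 * N ^ 2) (c * 4 ^ i) U) : ℝ) ≤
        C / β ^ 2 * ((#U : ℝ) ^ 2 / (β ^ 4 * N ^ 2) + T * #U + (#U : ℝ) ^ 2 / (β * T ^ 10)) := by
  obtain ⟨C, hC, hpairs⟩ := exists_sum_layers_card_majorPairs_le c hc
  have hc' : (1 : ℝ) ≤ c := by exact_mod_cast hc
  refine ⟨16000 * (C * c), by nlinarith, fun N I β hβ hI hN U hU T hT ↦ ?_⟩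
  set D : ℝ := 400 * c / β ^ 4 with hD
  calc _ ≤ C * 2 ^ I * (D * (#U : ℝ) ^ 2 / N ^ 2 + T * #U +
        (#U : ℝ) ^ 2 * D ^ (1 / 4 : ℝ) / T ^ 10) :=
        hpairs N I D (by positivity) hN
          (fun i hi ↦ mul_four_pow_le_div_pow_four (by positivity) hI hi) U hU T hT
    _ ≤ C * (40 / β ^ 2) * (D * (#U : ℝ) ^ 2 / N ^ 2 + 400 * c * T * #U +
          (#U : ℝ) ^ 2 * (400 * c / β) / T ^ 10) := by
        gcongr
        · exact le_mul_of_one_le_left (by positivity) (by linarith)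
        · exact rpow_quarter_div_pow_four_le (by linarith) hβ
    _ = _ := by
        rw [hD]
        field_simp
        ring

/-- The sizes of `weylSum` are pigeonholed over `≈ log (1 / β)` major arc layers; `T` cuts off the
divisor function in the count of pairs. -/
lemma exists_sum_norm_weylSum_sub_le : ∃ C : ℝ, 1 ≤ C ∧ ∀ N : ℕ, 1 ≤ N →
    ∀ β : ℝ, 0 < β → β ≤ 1 → C ≤ β ^ 4 * N → ∀ U ⊆ range (20 * N ^ 2), ∀ T : ℝ, 0 < T →
      ∑ p ∈ U ×ˢ U, ‖weylSum N ((p.1 - p.2) / (20 * N ^ 2 : ℕ))‖ ≤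
        N ^ 2 * (β ^ 2 / 2 * (#U : ℝ) ^ 2 + C / β ^ 2 *
          ((#U : ℝ) ^ 2 / (β ^ 4 * N ^ 2) + T * #U + (#U : ℝ) ^ 2 / (β * T ^ 10))) := by
  obtain ⟨c, hc, hweyl⟩ := exists_sum_norm_weylSum_le
  obtain ⟨C, hC, hpairs⟩ := exists_sum_layers_card_majorPairs_le_of_two_pow_le hc
  have hc' : (0 : ℝ) ≤ c := c.cast_nonneg
  refine ⟨C + 6400 * c, by linarith, fun N hN β hβ hβ1 hβN U hU T hT ↦ ?_⟩
  obtain ⟨I, hI, hI'⟩ := exists_two_pow_mem_Icc hβ hβ1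
  have hDN : 16 * (400 * c / β ^ 4) ≤ N := by
    rw [mul_div_assoc', div_le_iff₀ (by positivity)]
    linarith
  have hlayerN : ∀ i < I, c * 4 ^ i ≤ N := fun i hi ↦ by
    have hlayer := mul_four_pow_le_div_pow_four hc' hI' hi
    have : (c * 4 ^ i : ℝ) ≤ N := by linarith [show (0 : ℝ) ≤ c * 4 ^ i by positivity]
    exact_mod_cast this
  have htail : 10 / 2 ^ I ≤ β ^ 2 / 2 := by
    rw [div_le_iff₀ (by positivity)] at hI
    rw [div_le_div_iff₀ (by positivity) (by norm_num)]
    linarith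
  refine (hweyl N I hN hlayerN _ U).trans (mul_le_mul_of_nonneg_left ?_ (by positivity))
  refine add_le_add (mul_le_mul_of_nonneg_right htail (by positivity))
    ((hpairs N I β hβ hI' hDN U hU T hT).trans ?_)
  gcongr
  linarith

lemma exists_pow_mul_card_levelSet_sq_le : ∃ C : ℝ, 1 ≤ C ∧ ∀ N : ℕ, 1 ≤ N → ∀ f : ℤ → ℂ,
    ∑ x ∈ Icc (-(N : ℤ)) N, ‖f x‖ ^ 2 ≤ N → ∀ β : ℝ, 0 < β → β ≤ 1 → C ≤ β ^ 4 * N →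
    ∀ T : ℝ, 0 < T → β ^ 4 * (#(levelSet N f β) : ℝ) ^ 2 ≤
      C * ((#(levelSet N f β) : ℝ) ^ 2 / (β ^ 4 * N ^ 2) + T * #(levelSet N f β) +
        (#(levelSet N f β) : ℝ) ^ 2 / (β * T ^ 10)) := by
  classical
  obtain ⟨C, hC, hweyl⟩ := exists_sum_norm_weylSum_sub_le
  refine ⟨2 * C, by linarith, fun N hN f hf β hβ hβ1 hβN T hT ↦ ?_⟩
  set U := levelSet N f β
  set X := (#U : ℝ) ^ 2 / (β ^ 4 * N ^ 2) + T * #U + (#U : ℝ) ^ 2 / (β * T ^ 10)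
  have hmain : N ^ 2 * (β ^ 2 * (#U : ℝ) ^ 2) ≤
      N ^ 2 * (β ^ 2 / 2 * (#U : ℝ) ^ 2 + C / β ^ 2 * X) := by
    calc N ^ 2 * (β ^ 2 * (#U : ℝ) ^ 2) = (#U * (β * N)) ^ 2 := by ring
      _ ≤ _ := (card_levelSet_sq_mul_le hβ.le hf).trans
        (hweyl N hN β hβ hβ1 (by linarith) U (filter_subset _ _) T hT)
  have hhalf : β ^ 2 / 2 * (#U : ℝ) ^ 2 ≤ C / β ^ 2 * X := by
    linarith [le_of_mul_le_mul_left hmain (by positivity)]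
  calc β ^ 4 * (#U : ℝ) ^ 2 = 2 * β ^ 2 * (β ^ 2 / 2 * (#U : ℝ) ^ 2) := by ring
    _ ≤ 2 * β ^ 2 * (C / β ^ 2 * X) := by gcongr
    _ = 2 * C * X := by field_simp

lemma exists_card_levelSet_sq_le : ∃ C : ℝ, 1 ≤ C ∧ ∀ N : ℕ, 1 ≤ N → ∀ f : ℤ → ℂ,
    ∑ x ∈ Icc (-(N : ℤ)) N, ‖f x‖ ^ 2 ≤ N → ∀ γ : ℝ, 0 < γ → γ ≤ 1 → C ≤ γ ^ 8 * N →
      (#(levelSet N f (γ ^ 2)) : ℝ) ≤ C / γ ^ 9 := by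
  obtain ⟨C, hC, hquad⟩ := exists_pow_mul_card_levelSet_sq_le
  refine ⟨8 * C ^ 2, by nlinarith, fun N hN f hf γ hγ hγ1 hγN ↦ ?_⟩
  have h4C : 4 * C ≤ γ ^ 8 * N := by nlinarith
  have hquad := hquad N hN f hf (γ ^ 2) (by positivity) (pow_le_one₀ hγ.le hγ1)
    (by rw [← pow_mul]; change C ≤ γ ^ 8 * N; linarith) (4 * C / γ) (by positivity)
  set R : ℝ := ↑(#(levelSet N f (γ ^ 2)))
  have hfirst : C * (R ^ 2 / ((γ ^ 2) ^ 4 * N ^ 2)) ≤ γ ^ 8 * R ^ 2 / 4 := by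
    have : 4 * C ≤ (γ ^ 8 * N) ^ 2 := h4C.trans (le_self_pow₀ (by linarith) (by norm_num))
    rw [mul_div_assoc', div_le_div_iff₀ (by positivity) (by norm_num)]
    calc C * R ^ 2 * 4 = 4 * C * R ^ 2 := by ring
      _ ≤ (γ ^ 8 * N) ^ 2 * R ^ 2 := by gcongr
      _ = γ ^ 8 * R ^ 2 * ((γ ^ 2) ^ 4 * N ^ 2) := by ring
  have hlast : C * (R ^ 2 / (γ ^ 2 * (4 * C / γ) ^ 10)) ≤ γ ^ 8 * R ^ 2 / 4 := by
    calc C * (R ^ 2 / (γ ^ 2 * (4 * C / γ) ^ 10))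
        = γ ^ 8 * R ^ 2 / 4 * (4 * C / (4 * C) ^ 10) := by field_simp
      _ ≤ γ ^ 8 * R ^ 2 / 4 * 1 := by
          gcongr
          rw [div_le_one (by positivity)]
          exact le_self_pow₀ (by linarith) (by norm_num)
      _ = γ ^ 8 * R ^ 2 / 4 := mul_one _
  have hR0 : 0 ≤ R := Nat.cast_nonneg _
  rcases hR0.eq_or_lt with hR | hR
  · rw [← hR]
    positivity
  have hlin : R * (R * γ ^ 9) ≤ R * (8 * C ^ 2) := by
    calc R * (R * γ ^ 9) = 2 * γ * (γ ^ 8 * R ^ 2 / 2) := by ring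
      _ ≤ 2 * γ * (C * (4 * C / γ * R)) := by
          gcongr
          linarith [show (γ ^ 2) ^ 4 * R ^ 2 = γ ^ 8 * R ^ 2 by ring]
      _ = R * (8 * C ^ 2) := by field_simp; ring
  rw [le_div_iff₀ (by positivity)]
  exact le_of_mul_le_mul_left hlin hR

end LevelSet

/-! ### Moments of quadratic exponential sums -/

section FourthMoment

variable {N : ℕ} {f : ℤ → ℂ}

/-- The pairs in `[-N, N]²` whose squares differ by `m`. -/
def sqDiffPairs (N : ℕ) (m : ℤ) : Finset (ℤ × ℤ) :=
  {p ∈ Icc (-(N : ℤ)) N ×ˢ Icc (-(N : ℤ)) N | p.1 ^ 2 - p.2 ^ 2 = m}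

/-- The `m`-th Fourier coefficient of `|quadSum N f|²`. -/
def sqDiffCoeff (N : ℕ) (f : ℤ → ℂ) (m : ℤ) : ℂ := ∑ p ∈ sqDiffPairs N m, f p.1 * conj (f p.2)

lemma card_sqDiffPairs_le (N : ℕ) {m : ℤ} (hm : m ≠ 0) :
    #(sqDiffPairs N m) ≤ 2 * #m.natAbs.divisors := by
  set S : Finset ℤ := m.natAbs.divisors.image (fun d : ℕ ↦ (d : ℤ)) ∪
    m.natAbs.divisors.image (fun d : ℕ ↦ -(d : ℤ)) with hS
  have hcard : #S ≤ 2 * #m.natAbs.divisors := by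
    rw [two_mul]
    exact (card_union_le _ _).trans (add_le_add card_image_le card_image_le)
  refine (card_le_card_of_injOn (fun p ↦ p.1 - p.2) (fun p hp ↦ ?_) fun p hp p' hp' h ↦ ?_).trans
    hcard
  · have hp := (mem_filter.1 hp).2
    have hdvd : (p.1 - p.2) ∣ m := ⟨p.1 + p.2, by rw [← hp]; ring⟩
    have hmem : (p.1 - p.2).natAbs ∈ m.natAbs.divisors :=
      Nat.mem_divisors.2 ⟨Int.natAbs_dvd_natAbs.2 hdvd, Int.natAbs_ne_zero.2 hm⟩
    rw [mem_coe, hS, mem_union, mem_image, mem_image]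
    exact (Int.natAbs_eq (p.1 - p.2)).imp (fun h ↦ ⟨_, hmem, h.symm⟩) fun h ↦ ⟨_, hmem, h.symm⟩
  · have hp := (mem_filter.1 hp).2
    have hp' := (mem_filter.1 hp').2
    have hdiff : p.1 - p.2 = p'.1 - p'.2 := h
    have hdiff0 : p.1 - p.2 ≠ 0 := fun h0 ↦ hm (by rw [← hp, sub_eq_zero.1 h0, sub_self])
    have hsum : p.1 + p.2 = p'.1 + p'.2 := mul_left_cancel₀ hdiff0 <| by
      calc (p.1 - p.2) * (p.1 + p.2) = m := by rw [← hp]; ring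
        _ = (p.1 - p.2) * (p'.1 + p'.2) := by rw [hdiff, ← hp']; ring
    ext <;> linarith

lemma exists_card_sqDiffPairs_le {ε : ℝ} (hε : 0 < ε) : ∃ C : ℝ, 1 ≤ C ∧ ∀ N : ℕ, ∀ m : ℤ, m ≠ 0 →
    m ∈ Icc (-(N : ℤ) ^ 2) (N ^ 2) → (#(sqDiffPairs N m) : ℝ) ≤ C * (N : ℝ) ^ ε := by
  obtain ⟨C, hC, hdivisors⟩ := exists_card_divisors_le (half_pos hε)
  refine ⟨2 * C, by linarith, fun N m hm hmN ↦ ?_⟩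
  rw [mem_Icc] at hmN
  have hmN' : (m.natAbs : ℝ) ≤ (N : ℝ) ^ 2 := by
    have : m.natAbs ≤ N ^ 2 := by
      zify
      exact abs_le.2 ⟨by linarith, hmN.2⟩
    exact_mod_cast this
  calc (#(sqDiffPairs N m) : ℝ) ≤ 2 * #m.natAbs.divisors := by
        exact_mod_cast card_sqDiffPairs_le N hm
    _ ≤ 2 * (C * (m.natAbs : ℝ) ^ (ε / 2)) := by
        gcongr
        exact hdivisors _ (Int.natAbs_ne_zero.2 hm)
    _ ≤ 2 * (C * ((N : ℝ) ^ 2) ^ (ε / 2)) := by gcongr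
    _ = 2 * C * (N : ℝ) ^ ε := by
        rw [← Real.rpow_natCast, ← Real.rpow_mul (by positivity), mul_assoc]
        push_cast
        rw [mul_div_cancel₀ _ two_ne_zero]

lemma sq_sub_sq_mem_Icc {p : ℤ × ℤ} (hp : p ∈ Icc (-(N : ℤ)) N ×ˢ Icc (-(N : ℤ)) N) :
    p.1 ^ 2 - p.2 ^ 2 ∈ Icc (-(N : ℤ) ^ 2) (N ^ 2) := by
  rw [mem_product, mem_Icc, mem_Icc] at hp
  have h1 : p.1 ^ 2 ≤ (N : ℤ) ^ 2 := sq_le_sq' hp.1.1 hp.1.2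
  have h2 : p.2 ^ 2 ≤ (N : ℤ) ^ 2 := sq_le_sq' hp.2.1 hp.2.2
  exact mem_Icc.2 ⟨by linarith [sq_nonneg p.1], by linarith [sq_nonneg p.2]⟩

lemma ofReal_norm_sq_quadSum (N : ℕ) (f : ℤ → ℂ) (θ : ℝ) :
    ((‖quadSum N f θ‖ ^ 2 : ℝ) : ℂ) =
      ∑ m ∈ Icc (-(N : ℤ) ^ 2) (N ^ 2), sqDiffCoeff N f m * 𝐞 (m * θ) := by
  rw [quadSum, ofReal_norm_sq_sum, ← sum_product',
    ← sum_fiberwise_of_maps_to fun p hp ↦ sq_sub_sq_mem_Icc hp]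
  refine sum_congr rfl fun m _ ↦ ?_
  rw [sqDiffCoeff, sum_mul, sqDiffPairs]
  refine sum_congr rfl fun p hp ↦ ?_
  have hm : (m : ℝ) = (p.1 : ℝ) ^ 2 - (p.2 : ℝ) ^ 2 := by exact_mod_cast (mem_filter.1 hp).2.symm
  rw [hm, sub_mul, ← fourierChar_mul_conj_fourierChar, map_mul conj]
  ring

lemma sum_norm_quadSum_pow_four (hN : 1 ≤ N) (f : ℤ → ℂ) :
    ∑ j ∈ range (20 * N ^ 2), ‖quadSum N f (j / (20 * N ^ 2 : ℕ))‖ ^ 4 =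
      20 * N ^ 2 * ∑ m ∈ Icc (-(N : ℤ) ^ 2) (N ^ 2), ‖sqDiffCoeff N f m‖ ^ 2 := by
  have hN2 : (1 : ℤ) ≤ (N : ℤ) ^ 2 := by exact_mod_cast Nat.one_le_pow 2 N hN
  have hparseval := sum_range_norm_sq_sum_mul_fourierChar (M := 20 * N ^ 2) (by positivity)
    (s := Icc (-(N : ℤ) ^ 2) (N ^ 2)) (ν := id) (fun a ha b hb hdvd ↦ ?_) (sqDiffCoeff N f)
  · push_cast at hparseval
    rw [← hparseval]
    refine sum_congr rfl fun j _ ↦ ?_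
    simp only [id_eq]
    rw [← ofReal_norm_sq_quadSum, Complex.norm_of_nonneg (by positivity)]
    push_cast
    ring
  · rw [mem_Icc] at ha hb
    have : a - b = 0 := by
      refine Int.eq_zero_of_abs_lt_dvd hdvd (abs_lt.2 ?_)
      push_cast
      constructor <;> linarith
    linarith

lemma norm_sqDiffCoeff_le (N : ℕ) (f : ℤ → ℂ) (m : ℤ) :
    ‖sqDiffCoeff N f m‖ ≤ ∑ p ∈ sqDiffPairs N m, ‖f p.1‖ * ‖f p.2‖ :=
  norm_sum_le_of_le _ fun p _ ↦ by rw [norm_mul, RCLike.norm_conj]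

lemma norm_sqDiffCoeff_zero_le (N : ℕ) (f : ℤ → ℂ) :
    ‖sqDiffCoeff N f 0‖ ≤ 2 * ∑ x ∈ Icc (-(N : ℤ)) N, ‖f x‖ ^ 2 := by
  have hpair : ∀ p ∈ sqDiffPairs N 0, p.1 = p.2 ∨ p.1 = -p.2 := fun p hp ↦
    sq_eq_sq_iff_eq_or_eq_neg.1 (sub_eq_zero.1 (mem_filter.1 hp).2)
  have hfst : ∑ p ∈ sqDiffPairs N 0, ‖f p.1‖ ^ 2 ≤
      (2 : ℕ) * ∑ x ∈ Icc (-(N : ℤ)) N, ‖f x‖ ^ 2 := by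
    refine sum_comp_le_mul_sum (f := fun x ↦ ‖f x‖ ^ 2) (fun x _ ↦ by positivity)
      (fun p hp ↦ (mem_product.1 (mem_filter.1 hp).1).1) fun x _ ↦ ?_
    refine (card_le_card (t := {(x, x), (x, -x)}) fun p hp ↦ ?_).trans card_le_two
    obtain ⟨hp0, rfl⟩ := mem_filter.1 hp
    rcases hpair p hp0 with h | h <;> simp [Prod.ext_iff, h]
  have hsnd : ∑ p ∈ sqDiffPairs N 0, ‖f p.2‖ ^ 2 ≤
      (2 : ℕ) * ∑ x ∈ Icc (-(N : ℤ)) N, ‖f x‖ ^ 2 := by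
    refine sum_comp_le_mul_sum (f := fun x ↦ ‖f x‖ ^ 2) (fun x _ ↦ by positivity)
      (fun p hp ↦ (mem_product.1 (mem_filter.1 hp).1).2) fun x _ ↦ ?_
    refine (card_le_card (t := {(x, x), (-x, x)}) fun p hp ↦ ?_).trans card_le_two
    obtain ⟨hp0, rfl⟩ := mem_filter.1 hp
    rcases hpair p hp0 with h | h <;> simp [Prod.ext_iff, h]
  have hamgm : 2 * ∑ p ∈ sqDiffPairs N 0, ‖f p.1‖ * ‖f p.2‖ ≤
      ∑ p ∈ sqDiffPairs N 0, ‖f p.1‖ ^ 2 + ∑ p ∈ sqDiffPairs N 0, ‖f p.2‖ ^ 2 := by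
    rw [mul_sum, ← sum_add_distrib]
    refine sum_le_sum fun p _ ↦ ?_
    rw [← mul_assoc]
    exact two_mul_le_add_sq _ _
  push_cast at hfst hsnd
  linarith [norm_sqDiffCoeff_le N f 0]

lemma sum_sum_sqDiffPairs_le (s : Finset ℤ) (hf : ∑ x ∈ Icc (-(N : ℤ)) N, ‖f x‖ ^ 2 ≤ N) :
    ∑ m ∈ s, ∑ p ∈ sqDiffPairs N m, (‖f p.1‖ * ‖f p.2‖) ^ 2 ≤ (N : ℝ) ^ 2 := by
  calc ∑ m ∈ s, ∑ p ∈ sqDiffPairs N m, (‖f p.1‖ * ‖f p.2‖) ^ 2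
      ≤ ∑ p ∈ Icc (-(N : ℤ)) N ×ˢ Icc (-(N : ℤ)) N, (‖f p.1‖ * ‖f p.2‖) ^ 2 :=
        sum_fiberwise_le_sum_of_sum_fiber_nonneg fun m _ ↦ sum_nonneg fun p _ ↦ by positivity
    _ = (∑ x ∈ Icc (-(N : ℤ)) N, ‖f x‖ ^ 2) ^ 2 := by
        simp only [sum_product, mul_pow]
        rw [← sum_mul_sum, ← sq]
    _ ≤ (N : ℝ) ^ 2 := by gcongr

lemma exists_sum_norm_quadSum_pow_four_le {ε : ℝ} (hε : 0 < ε) : ∃ C : ℝ, 1 ≤ C ∧ ∀ N : ℕ, 1 ≤ N →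
    ∀ f : ℤ → ℂ, ∑ x ∈ Icc (-(N : ℤ)) N, ‖f x‖ ^ 2 ≤ N →
    ∑ j ∈ range (20 * N ^ 2), ‖quadSum N f (j / (20 * N ^ 2 : ℕ))‖ ^ 4 ≤
      C * (N : ℝ) ^ 4 * (N : ℝ) ^ ε := by
  obtain ⟨C, hC, hpairs⟩ := exists_card_sqDiffPairs_le hε
  refine ⟨20 * (4 + C), by linarith, fun N hN f hf ↦ ?_⟩
  set J := Icc (-(N : ℤ) ^ 2) (N ^ 2)
  have hzero : ‖sqDiffCoeff N f 0‖ ^ 2 ≤ 4 * (N : ℝ) ^ 2 := by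
    calc ‖sqDiffCoeff N f 0‖ ^ 2 ≤ (2 * N) ^ 2 := by
          gcongr
          exact (norm_sqDiffCoeff_zero_le N f).trans (by gcongr)
      _ = 4 * (N : ℝ) ^ 2 := by ring
  have hne : ∑ m ∈ J.erase 0, ‖sqDiffCoeff N f m‖ ^ 2 ≤ C * (N : ℝ) ^ ε * (N : ℝ) ^ 2 := by
    calc ∑ m ∈ J.erase 0, ‖sqDiffCoeff N f m‖ ^ 2
        ≤ ∑ m ∈ J.erase 0,
            C * (N : ℝ) ^ ε * ∑ p ∈ sqDiffPairs N m, (‖f p.1‖ * ‖f p.2‖) ^ 2 := by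
          refine sum_le_sum fun m hm ↦ ?_
          calc ‖sqDiffCoeff N f m‖ ^ 2 ≤ (∑ p ∈ sqDiffPairs N m, ‖f p.1‖ * ‖f p.2‖) ^ 2 := by
                gcongr
                exact norm_sqDiffCoeff_le N f m
            _ ≤ #(sqDiffPairs N m) * ∑ p ∈ sqDiffPairs N m, (‖f p.1‖ * ‖f p.2‖) ^ 2 :=
                sq_sum_le_card_mul_sum_sq
            _ ≤ C * (N : ℝ) ^ ε * ∑ p ∈ sqDiffPairs N m, (‖f p.1‖ * ‖f p.2‖) ^ 2 := by
                gcongr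
                exact hpairs N m (ne_of_mem_erase hm) (mem_of_mem_erase hm)
      _ ≤ C * (N : ℝ) ^ ε * (N : ℝ) ^ 2 := by
          rw [← mul_sum]
          gcongr
          exact sum_sum_sqDiffPairs_le _ hf
  have hzero_mem : (0 : ℤ) ∈ J := mem_Icc.2 ⟨by simp, by positivity⟩
  have hNε : 1 ≤ (N : ℝ) ^ ε := Real.one_le_rpow (by exact_mod_cast hN) hε.le
  calc ∑ j ∈ range (20 * N ^ 2), ‖quadSum N f (j / (20 * N ^ 2 : ℕ))‖ ^ 4
      = 20 * N ^ 2 * (‖sqDiffCoeff N f 0‖ ^ 2 + ∑ m ∈ J.erase 0, ‖sqDiffCoeff N f m‖ ^ 2) := by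
        rw [sum_norm_quadSum_pow_four hN,
          add_sum_erase J (fun m ↦ ‖sqDiffCoeff N f m‖ ^ 2) hzero_mem]
    _ ≤ 20 * N ^ 2 * (4 * (N : ℝ) ^ 2 * (N : ℝ) ^ ε + C * (N : ℝ) ^ ε * (N : ℝ) ^ 2) := by
        gcongr
        exact hzero.trans (le_mul_of_one_le_right (by positivity) hNε)
    _ = 20 * (4 + C) * (N : ℝ) ^ 4 * (N : ℝ) ^ ε := by ring

end FourthMoment

section FifthMoment

variable {N : ℕ} {f : ℤ → ℂ}

lemma levelSet_subset_range (N : ℕ) (f : ℤ → ℂ) (β : ℝ) : levelSet N f β ⊆ range (20 * N ^ 2) :=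
  filter_subset _ _

lemma card_levelSet_mul_pow_le_sum (N : ℕ) (f : ℤ → ℂ) {β : ℝ} (hβ : 0 ≤ β) (k : ℕ) :
    #(levelSet N f β) * (β * N) ^ k ≤
      ∑ j ∈ range (20 * N ^ 2), ‖quadSum N f (j / (20 * N ^ 2 : ℕ))‖ ^ k := by
  classical
  calc #(levelSet N f β) * (β * N) ^ k
      ≤ ∑ j ∈ levelSet N f β, ‖quadSum N f (j / (20 * N ^ 2 : ℕ))‖ ^ k := by
        rw [← nsmul_eq_mul]
        refine card_nsmul_le_sum _ _ _ fun j hj ↦ ?_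
        gcongr
        exact (mem_filter.1 hj).2
    _ ≤ ∑ j ∈ range (20 * N ^ 2), ‖quadSum N f (j / (20 * N ^ 2 : ℕ))‖ ^ k :=
        sum_le_sum_of_subset_of_nonneg (levelSet_subset_range N f β) fun j _ _ ↦ by positivity

/-- The fourth moment settles `γ ^ 8 * N ≤ C`, where its loss `N ^ (1 / 8)` costs only `1 / γ`. -/
lemma exists_card_levelSet_le : ∃ C : ℝ, 1 ≤ C ∧ ∀ N : ℕ, 1 ≤ N → ∀ f : ℤ → ℂ,
    ∑ x ∈ Icc (-(N : ℤ)) N, ‖f x‖ ^ 2 ≤ N → ∀ γ : ℝ, 0 < γ → γ ≤ 1 →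
      (#(levelSet N f (γ ^ 2)) : ℝ) ≤ C / γ ^ 9 := by
  obtain ⟨C₁, hC₁, hlarge⟩ := exists_card_levelSet_sq_le
  obtain ⟨C₂, hC₂, hfourth⟩ := exists_sum_norm_quadSum_pow_four_le (ε := 1 / 8) (by norm_num)
  refine ⟨C₁ * C₂, one_le_mul_of_one_le_of_one_le hC₁ hC₂, fun N hN f hf γ hγ hγ1 ↦ ?_⟩
  rcases le_total C₁ (γ ^ 8 * N) with h | h
  · refine (hlarge N hN f hf γ hγ hγ1 h).trans ?_
    gcongr
    exact le_mul_of_one_le_right (by linarith) hC₂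
  set R : ℝ := ↑(#(levelSet N f (γ ^ 2)))
  have hR : R * γ ^ 8 ≤ C₂ * (N : ℝ) ^ (1 / 8 : ℝ) := by
    refine le_of_mul_le_mul_left ?_ (show (0 : ℝ) < N ^ 4 by positivity)
    calc (N : ℝ) ^ 4 * (R * γ ^ 8) = R * (γ ^ 2 * N) ^ 4 := by ring
      _ ≤ C₂ * (N : ℝ) ^ 4 * (N : ℝ) ^ (1 / 8 : ℝ) :=
          (card_levelSet_mul_pow_le_sum N f (by positivity) 4).trans (hfourth N hN f hf)
      _ = N ^ 4 * (C₂ * (N : ℝ) ^ (1 / 8 : ℝ)) := by ring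
  have hloss : (N : ℝ) ^ (1 / 8 : ℝ) * γ ≤ C₁ := by
    calc (N : ℝ) ^ (1 / 8 : ℝ) * γ = (N : ℝ) ^ (1 / 8 : ℝ) * (γ ^ 8) ^ (1 / 8 : ℝ) := by
          rw [← Real.rpow_natCast γ, ← Real.rpow_mul hγ.le]
          norm_num
      _ = (γ ^ 8 * N) ^ (1 / 8 : ℝ) := by
          rw [Real.mul_rpow (by positivity) (by positivity), mul_comm]
      _ ≤ C₁ ^ (1 / 8 : ℝ) := by gcongr
      _ ≤ C₁ := Real.rpow_le_self_of_one_le hC₁ (by norm_num)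
  rw [le_div_iff₀ (by positivity)]
  calc R * γ ^ 9 = R * γ ^ 8 * γ := by ring
    _ ≤ C₂ * (N : ℝ) ^ (1 / 8 : ℝ) * γ := mul_le_mul_of_nonneg_right hR hγ.le
    _ = C₂ * ((N : ℝ) ^ (1 / 8 : ℝ) * γ) := by ring
    _ ≤ C₂ * C₁ := by gcongr
    _ = C₁ * C₂ := mul_comm _ _

lemma norm_quadSum_le (hN : 1 ≤ N) (hf : ∑ x ∈ Icc (-(N : ℤ)) N, ‖f x‖ ^ 2 ≤ N) (θ : ℝ) :
    ‖quadSum N f θ‖ ≤ 4 * N := by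
  have hN' : (1 : ℝ) ≤ N := by exact_mod_cast hN
  have hnorm : ‖quadSum N f θ‖ ≤ ∑ x ∈ Icc (-(N : ℤ)) N, ‖f x‖ :=
    norm_sum_le_of_le _ fun x _ ↦ by rw [norm_mul, Circle.norm_coe, mul_one]
  have hcard : (#(Icc (-(N : ℤ)) N) : ℝ) = 2 * N + 1 := by
    rw [Int.card_Icc, show ((N : ℤ) + 1 - -N).toNat = 2 * N + 1 by omega]
    push_cast
    rfl
  refine le_of_sq_le_sq ?_ (by positivity)
  calc ‖quadSum N f θ‖ ^ 2 ≤ (∑ x ∈ Icc (-(N : ℤ)) N, ‖f x‖) ^ 2 := by gcongr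
    _ ≤ #(Icc (-(N : ℤ)) N) * ∑ x ∈ Icc (-(N : ℤ)) N, ‖f x‖ ^ 2 := sq_sum_le_card_mul_sum_sq
    _ ≤ (2 * N + 1) * N := by
        rw [hcard]
        gcongr
    _ ≤ (4 * (N : ℝ)) ^ 2 := by nlinarith

open Classical in
lemma norm_quadSum_div_pow_five_le_sum_layers (hN : 1 ≤ N)
    (hf : ∑ x ∈ Icc (-(N : ℤ)) N, ‖f x‖ ^ 2 ≤ N) {j : ℕ} (hj : j ∈ range (20 * N ^ 2)) (I : ℕ) :
    (‖quadSum N f (j / (20 * N ^ 2 : ℕ))‖ / N) ^ 5 ≤ 1024 * ((1 / 2) ^ I) ^ 10 +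
      ∑ i ∈ range I,
        if j ∈ levelSet N f (((1 / 2) ^ i) ^ 2) then 1024 * ((1 / 2) ^ i) ^ 10 else 0 := by
  refine le_add_sum_range_ite (b := fun i ↦ 1024 * ((1 / 2 : ℝ) ^ i) ^ 10)
    (P := fun i ↦ j ∈ levelSet N f (((1 / 2) ^ i) ^ 2)) (fun i ↦ by positivity) ?_ I fun i _ hi ↦ ?_
  · calc (‖quadSum N f (j / (20 * N ^ 2 : ℕ))‖ / N) ^ 5 ≤ 4 ^ 5 := by
          gcongr
          rw [div_le_iff₀ (by positivity)]
          exact norm_quadSum_le hN hf _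
      _ = 1024 * ((1 / 2 : ℝ) ^ 0) ^ 10 := by norm_num
  · have hlt : ‖quadSum N f (j / (20 * N ^ 2 : ℕ))‖ / N < ((1 / 2) ^ i) ^ 2 := by
      rw [div_lt_iff₀ (by positivity)]
      exact not_le.1 fun h ↦ hi (mem_filter.2 ⟨hj, h⟩)
    calc (‖quadSum N f (j / (20 * N ^ 2 : ℕ))‖ / N) ^ 5 ≤ (((1 / 2) ^ i) ^ 2) ^ 5 := by gcongr
      _ = 1024 * ((1 / 2 : ℝ) ^ (i + 1)) ^ 10 := by ring

lemma natCast_mul_half_pow_pow_le_one (M : ℕ) : (M : ℝ) * ((1 / 2) ^ M) ^ 10 ≤ 1 := by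
  have hM : (M : ℝ) ≤ 2 ^ M := by exact_mod_cast Nat.lt_two_pow_self.le
  calc (M : ℝ) * ((1 / 2) ^ M) ^ 10 ≤ 2 ^ M * (1 / 2) ^ M := by
        gcongr
        exact pow_le_of_le_one (by positivity) (pow_le_one₀ (by norm_num) (by norm_num))
          (by norm_num)
    _ = 1 := by rw [← mul_pow]; norm_num

lemma exists_sum_norm_quadSum_pow_five_le : ∃ C : ℝ, 1 ≤ C ∧ ∀ N : ℕ, 1 ≤ N → ∀ f : ℤ → ℂ,
    ∑ x ∈ Icc (-(N : ℤ)) N, ‖f x‖ ^ 2 ≤ N →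
    ∑ j ∈ range (20 * N ^ 2), ‖quadSum N f (j / (20 * N ^ 2 : ℕ))‖ ^ 5 ≤ C * (N : ℝ) ^ 5 := by
  classical
  obtain ⟨C, hC, hlevel⟩ := exists_card_levelSet_le
  refine ⟨1024 + 2048 * C, by linarith, fun N hN f hf ↦ ?_⟩
  set M := 20 * N ^ 2
  have hnormalized : ∑ j ∈ range M, (‖quadSum N f (j / M)‖ / N) ^ 5 ≤ 1024 + 2048 * C := by
    calc ∑ j ∈ range M, (‖quadSum N f (j / M)‖ / N) ^ 5
        ≤ ∑ j ∈ range M, (1024 * ((1 / 2) ^ M) ^ 10 + ∑ i ∈ range M,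
            if j ∈ levelSet N f (((1 / 2) ^ i) ^ 2) then 1024 * ((1 / 2) ^ i) ^ 10 else 0) :=
          sum_le_sum fun j hj ↦ norm_quadSum_div_pow_five_le_sum_layers hN hf hj M
      _ = 1024 * (M * ((1 / 2) ^ M) ^ 10) + ∑ i ∈ range M,
            (#(levelSet N f (((1 / 2) ^ i) ^ 2)) : ℝ) * (1024 * ((1 / 2) ^ i) ^ 10) := by
          rw [sum_add_distrib, sum_const, card_range, nsmul_eq_mul, sum_comm, mul_left_comm]
          congr 1
          refine sum_congr rfl fun i _ ↦ ?_
          rw [← sum_filter, sum_const, nsmul_eq_mul, filter_mem_eq_inter,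
            inter_eq_right.2 (levelSet_subset_range N f _)]
      _ ≤ 1024 * 1 + ∑ i ∈ range M, 1024 * C * (1 / 2) ^ i := by
          refine add_le_add (mul_le_mul_of_nonneg_left (natCast_mul_half_pow_pow_le_one M)
            (by norm_num)) (sum_le_sum fun i _ ↦ ?_)
          set g : ℝ := (1 / 2) ^ i
          have hg : 0 < g := by positivity
          calc (#(levelSet N f (g ^ 2)) : ℝ) * (1024 * g ^ 10) ≤ C / g ^ 9 * (1024 * g ^ 10) := by
                gcongr
                exact hlevel N hN f hf g hg (pow_le_one₀ (by norm_num) (by norm_num))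
            _ = 1024 * C * g := by field_simp
      _ ≤ 1024 * 1 + 1024 * C * 2 := by
          rw [← mul_sum]
          gcongr
          exact sum_geometric_two_le M
      _ = 1024 + 2048 * C := by ring
  calc ∑ j ∈ range M, ‖quadSum N f (j / M)‖ ^ 5
      = (∑ j ∈ range M, (‖quadSum N f (j / M)‖ / N) ^ 5) * N ^ 5 := by
        rw [sum_mul]
        exact sum_congr rfl fun j _ ↦ by field_simp
    _ ≤ (1024 + 2048 * C) * (N : ℝ) ^ 5 := by gcongr

end FifthMoment

/-! ### The multilinear circle method -/

section Multilinear

variable {ι : Type*} [Fintype ι]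

lemma coe_fourierChar_sum (t : ι → ℝ) : (𝐞 (∑ i, t i) : ℂ) = ∏ i, (𝐞 (t i) : ℂ) := by
  exact map_prod (Circle.coeHom.comp (AddChar.toMonoidHom 𝐞))
    (fun i ↦ Multiplicative.ofAdd (t i)) univ

lemma prod_le_sum_pow_card [Nonempty ι] {a : ι → ℝ} (ha : ∀ i, 0 ≤ a i) :
    ∏ i, a i ≤ ∑ i, a i ^ Fintype.card ι := by
  obtain ⟨k, hk⟩ := Finite.exists_max a
  calc ∏ i, a i ≤ a k ^ Fintype.card ι :=
        (prod_le_prod (fun i _ ↦ ha i) fun i _ ↦ hk i).trans_eq (prod_const _)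
    _ ≤ ∑ i, a i ^ Fintype.card ι :=
        single_le_sum (f := fun i ↦ a i ^ Fintype.card ι) (fun i _ ↦ pow_nonneg (ha i) _)
          (mem_univ k)

lemma exists_sum_prod_norm_quadSum_le (hι : 5 ≤ Fintype.card ι) : ∃ C : ℝ, 0 ≤ C ∧
    ∀ N : ℕ, 1 ≤ N → ∀ f : ι → ℤ → ℂ, (∀ i, ∑ x ∈ Icc (-(N : ℤ)) N, ‖f i x‖ ^ 2 ≤ N) →
    ∑ j ∈ range (20 * N ^ 2), ∏ i, ‖quadSum N (f i) (j / (20 * N ^ 2 : ℕ))‖ ≤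
      C * (N : ℝ) ^ Fintype.card ι := by
  have : Nonempty ι := Fintype.card_pos_iff.1 (by omega)
  obtain ⟨C, hC, hfifth⟩ := exists_sum_norm_quadSum_pow_five_le
  obtain ⟨k, hk⟩ : ∃ k, Fintype.card ι = k + 5 := ⟨Fintype.card ι - 5, by omega⟩
  refine ⟨Fintype.card ι * 4 ^ k * C, by positivity, fun N hN f hf ↦ ?_⟩
  calc ∑ j ∈ range (20 * N ^ 2), ∏ i, ‖quadSum N (f i) (j / (20 * N ^ 2 : ℕ))‖
      ≤ ∑ j ∈ range (20 * N ^ 2), ∑ i,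
          (4 * (N : ℝ)) ^ k * ‖quadSum N (f i) (j / (20 * N ^ 2 : ℕ))‖ ^ 5 := by
        refine sum_le_sum fun j _ ↦ (prod_le_sum_pow_card fun i ↦ norm_nonneg _).trans ?_
        refine sum_le_sum fun i _ ↦ ?_
        rw [hk, pow_add]
        gcongr
        exact norm_quadSum_le hN (hf i) _
    _ = ∑ i, (4 * (N : ℝ)) ^ k *
          ∑ j ∈ range (20 * N ^ 2), ‖quadSum N (f i) (j / (20 * N ^ 2 : ℕ))‖ ^ 5 := by
        rw [sum_comm]
        simp only [mul_sum]
    _ ≤ ∑ _i : ι, (4 * (N : ℝ)) ^ k * (C * (N : ℝ) ^ 5) := by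
        gcongr with i
        exact hfifth N hN (f i) (hf i)
    _ = Fintype.card ι * 4 ^ k * C * (N : ℝ) ^ Fintype.card ι := by
        rw [sum_const, card_univ, nsmul_eq_mul, hk]
        ring

variable [DecidableEq ι]

/-- The integer points of the cube `[-N, N] ^ ι`. -/
def intBox (ι : Type*) [Fintype ι] [DecidableEq ι] (N : ℕ) : Finset (ι → ℤ) :=
  Fintype.piFinset fun _ ↦ Icc (-(N : ℤ)) N

lemma sum_range_fourierChar_mul_prod_quadSum {M : ℕ} (hM : 0 < M) (N : ℕ) (f : ι → ℤ → ℂ) (m : ℤ) :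
    ∑ j ∈ range M, 𝐞 (-(m * (j / M))) * ∏ i, quadSum N (f i) (j / M) =
      M * ∑ x ∈ intBox ι N with (M : ℤ) ∣ ∑ i, x i ^ 2 - m, ∏ i, f i (x i) := by
  have hexpand : ∀ j ∈ range M, 𝐞 (-(m * (j / M) : ℝ)) * ∏ i, quadSum N (f i) (j / M) =
      ∑ x ∈ intBox ι N, (∏ i, f i (x i)) * 𝐞 ((∑ i, x i ^ 2 - m : ℤ) * (j / M)) := by
    intro j _
    simp only [quadSum]
    rw [prod_univ_sum, mul_sum]
    refine sum_congr rfl fun x _ ↦ ?_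
    rw [prod_mul_distrib, ← coe_fourierChar_sum, mul_left_comm, ← coe_fourierChar_add, ← sum_mul]
    push_cast
    ring_nf
  rw [sum_congr rfl hexpand, sum_comm, sum_filter, mul_sum]
  refine sum_congr rfl fun x _ ↦ ?_
  rw [← mul_sum, sum_range_fourierChar hM, mul_ite, mul_ite, mul_zero, mul_zero, mul_comm]

lemma natCast_mul_norm_sum_intBox_le {M : ℕ} (hM : 0 < M) (N : ℕ) (f : ι → ℤ → ℂ) (m : ℤ) :
    M * ‖∑ x ∈ intBox ι N with (M : ℤ) ∣ ∑ i, x i ^ 2 - m, ∏ i, f i (x i)‖ ≤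
      ∑ j ∈ range M, ∏ i, ‖quadSum N (f i) (j / M)‖ := by
  calc M * ‖∑ x ∈ intBox ι N with (M : ℤ) ∣ ∑ i, x i ^ 2 - m, ∏ i, f i (x i)‖
      = ‖∑ j ∈ range M, 𝐞 (-(m * (j / M) : ℝ)) * ∏ i, quadSum N (f i) (j / M)‖ := by
        rw [sum_range_fourierChar_mul_prod_quadSum hM, norm_mul, Complex.norm_natCast]
    _ ≤ ∑ j ∈ range M, ∏ i, ‖quadSum N (f i) (j / M)‖ :=
        norm_sum_le_of_le _ fun j _ ↦ by rw [norm_mul, Circle.norm_coe, one_mul, norm_prod]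

lemma exists_sum_intBox_prod_le_of_sum_sq_le (hι : 5 ≤ Fintype.card ι) : ∃ C : ℝ, 0 ≤ C ∧
    ∀ N : ℕ, 1 ≤ N → ∀ g : ι → ℤ → ℝ, (∀ i x, 0 ≤ g i x) →
    (∀ i, ∑ x ∈ Icc (-(N : ℤ)) N, g i x ^ 2 ≤ N) → ∀ m : ℤ,
    ∑ x ∈ intBox ι N with ∑ i, x i ^ 2 = m, ∏ i, g i (x i) ≤
      C * (N : ℝ) ^ (Fintype.card ι - 2) := by
  obtain ⟨C, hC, hprod⟩ := exists_sum_prod_norm_quadSum_le hι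
  refine ⟨C, hC, fun N hN g hg hg2 m ↦ ?_⟩
  set S := ∑ x ∈ intBox ι N with ((20 * N ^ 2 : ℕ) : ℤ) ∣ ∑ i, x i ^ 2 - m, ∏ i, g i (x i)
  have hle : ∑ x ∈ intBox ι N with ∑ i, x i ^ 2 = m, ∏ i, g i (x i) ≤ S :=
    sum_le_sum_of_subset_of_nonneg
      (monotone_filter_right _ fun x _ hx ↦ (sub_eq_zero.2 hx).symm ▸ dvd_zero _)
      fun x _ _ ↦ prod_nonneg fun i _ ↦ hg i _
  have hcircle : (20 * N ^ 2 : ℕ) * S ≤ C * (N : ℝ) ^ Fintype.card ι := by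
    refine le_trans ?_ (hprod N hN (fun i x ↦ (g i x : ℂ)) fun i ↦ ?_)
    · refine le_trans ?_ (natCast_mul_norm_sum_intBox_le (by positivity) N _ m)
      gcongr
      simp only [← Complex.ofReal_prod, ← Complex.ofReal_sum, Complex.norm_real]
      exact Real.le_norm_self _
    · simpa only [Complex.norm_real, Real.norm_eq_abs, sq_abs] using hg2 i
  refine hle.trans (le_of_mul_le_mul_left ?_ (show (0 : ℝ) < N ^ 2 by positivity))
  have hS0 : 0 ≤ S := sum_nonneg fun x _ ↦ prod_nonneg fun i _ ↦ hg i _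
  calc (N : ℝ) ^ 2 * S ≤ (20 * N ^ 2 : ℕ) * S := by
        gcongr
        push_cast
        linarith [sq_nonneg (N : ℝ)]
    _ ≤ C * (N : ℝ) ^ Fintype.card ι := hcircle
    _ = (N : ℝ) ^ 2 * (C * (N : ℝ) ^ (Fintype.card ι - 2)) := by
        rw [mul_left_comm, ← pow_add, Nat.add_sub_cancel' (by omega)]

lemma exists_sum_intBox_prod_le (hι : 5 ≤ Fintype.card ι) : ∃ C : ℝ, 0 ≤ C ∧
    ∀ N : ℕ, 1 ≤ N → ∀ g : ι → ℤ → ℝ, (∀ i x, 0 ≤ g i x) → ∀ m : ℤ,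
    ∑ x ∈ intBox ι N with ∑ i, x i ^ 2 = m, ∏ i, g i (x i) ≤
      C * (N : ℝ) ^ (Fintype.card ι - 2) *
        ∏ i, √((N : ℝ)⁻¹ * ∑ x ∈ Icc (-(N : ℤ)) N, g i x ^ 2) := by
  obtain ⟨C, hC, hnormalized⟩ := exists_sum_intBox_prod_le_of_sum_sq_le hι
  refine ⟨C, hC, fun N hN g hg m ↦ ?_⟩
  set s : ι → ℝ := fun i ↦ √((N : ℝ)⁻¹ * ∑ x ∈ Icc (-(N : ℤ)) N, g i x ^ 2) with hs
  have hs0 (i : ι) : 0 ≤ s i := Real.sqrt_nonneg _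
  have hsq (i : ι) : ∑ x ∈ Icc (-(N : ℤ)) N, g i x ^ 2 = N * s i ^ 2 := by
    rw [hs, Real.sq_sqrt (by positivity), mul_inv_cancel_left₀ (by positivity)]
  by_cases hzero : ∃ i, s i = 0
  · obtain ⟨i, hi⟩ := hzero
    have hgi : ∀ x ∈ Icc (-(N : ℤ)) N, g i x = 0 := fun x hx ↦ pow_eq_zero_iff two_ne_zero |>.1 <|
      (sum_eq_zero_iff_of_nonneg fun _ _ ↦ sq_nonneg _).1 (by rw [hsq, hi]; simp) x hx
    have hprod : ∀ x ∈ intBox ι N, ∏ i, g i (x i) = 0 :=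
      fun x hx ↦ prod_eq_zero (mem_univ i) (hgi _ (Fintype.mem_piFinset.1 hx i))
    rw [sum_eq_zero fun x hx ↦ hprod x (mem_filter.1 hx).1]
    exact mul_nonneg (by positivity) (prod_nonneg fun i _ ↦ hs0 i)
  · push Not at hzero
    have hspos (i : ι) : 0 < s i := (hs0 i).lt_of_ne' (hzero i)
    rw [← div_le_iff₀ (prod_pos fun i _ ↦ hspos i), sum_div]
    simp only [← prod_div_distrib]
    refine hnormalized N hN (fun i x ↦ g i x / s i) (fun i x ↦ div_nonneg (hg i x) (hs0 i))
      (fun i ↦ ?_) m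
    simp only [div_pow]
    rw [← sum_div, hsq, mul_div_cancel_right₀ _ (pow_ne_zero 2 (hzero i))]

end Multilinear

/-! ### Spherical averages -/

lemma mulAvg_eq (n lam : ℕ) (f : Fin n → ℤ → ℂ) (y : ℤ) : mulAvg n lam f y =
    (sphereCount n lam : ℂ)⁻¹ * ∑ x ∈ spherePoints n lam, ∏ i, f i (y - x i) := by
  rw [mulAvg, finsum_mem_eq_finite_toFinset_sum _ (finite_setOf_sum_sq_eq n lam), spherePoints]

lemma spherePoints_eq_filter_intBox {n N : ℕ} {m : ℤ} (hm : m ≤ N ^ 2) :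
    spherePoints n m = {x ∈ intBox (Fin n) N | ∑ i, x i ^ 2 = m} := by
  ext x
  rw [mem_spherePoints, mem_filter, iff_and_self]
  refine fun hx ↦ Fintype.mem_piFinset.2 fun i ↦ mem_Icc.2 (abs_le_of_sq_le_sq' ?_ (by positivity))
  calc x i ^ 2 ≤ ∑ i, x i ^ 2 :=
        single_le_sum (f := fun i ↦ x i ^ 2) (fun _ _ ↦ sq_nonneg _) (mem_univ i)
    _ ≤ (N : ℤ) ^ 2 := hx.trans_le hm

lemma natSqrt_add_one_le_two_mul_sqrt {lam : ℕ} (hlam : 1 ≤ lam) :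
    ((Nat.sqrt lam + 1 : ℕ) : ℝ) ≤ 2 * √lam := by
  have h1 : 1 ≤ √(lam : ℝ) := Real.one_le_sqrt.2 (by exact_mod_cast hlam)
  push_cast
  linarith [Real.nat_sqrt_le_real_sqrt (a := lam)]

lemma exists_norm_mulAvg_le {n : ℕ} (hn : 5 ≤ n) : ∃ C : ℝ, 0 ≤ C ∧ ∀ f : Fin n → ℤ → ℂ,
    ∀ y : ℤ, ∀ lam : ℕ, 1 ≤ lam → ∃ N : ℕ, 1 ≤ N ∧ ‖mulAvg n lam f y‖ ≤
      C * ∏ i, √((N : ℝ)⁻¹ * ∑ x ∈ Icc (-(N : ℤ)) N, ‖f i (y - x)‖ ^ 2) := by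
  obtain ⟨C, hC, hbox⟩ := exists_sum_intBox_prod_le (ι := Fin n) (by rwa [Fintype.card_fin])
  obtain ⟨c, hc, hsphere⟩ := exists_mul_sqrt_pow_le_sphereCount hn
  refine ⟨C * 2 ^ (n - 2) / c, by positivity, fun f y lam hlam ↦ ?_⟩
  refine ⟨Nat.sqrt lam + 1, by omega, ?_⟩
  set N := Nat.sqrt lam + 1
  set P := ∏ i, √((N : ℝ)⁻¹ * ∑ x ∈ Icc (-(N : ℤ)) N, ‖f i (y - x)‖ ^ 2)
  have : 0 ≤ P := prod_nonneg fun i _ ↦ Real.sqrt_nonneg _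
  have hlamN : (lam : ℤ) ≤ N ^ 2 := by exact_mod_cast (Nat.lt_succ_sqrt' lam).le
  have hcount : (0 : ℝ) < sphereCount n lam := by exact_mod_cast sphereCount_pos (by omega) lam
  rw [mulAvg_eq, norm_mul, norm_inv, Complex.norm_natCast, inv_mul_le_iff₀ hcount]
  calc ‖∑ x ∈ spherePoints n lam, ∏ i, f i (y - x i)‖
      ≤ ∑ x ∈ spherePoints n lam, ∏ i, ‖f i (y - x i)‖ :=
        norm_sum_le_of_le _ fun x _ ↦ (norm_prod _ _).le
    _ ≤ C * (N : ℝ) ^ (n - 2) * P := by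
        rw [spherePoints_eq_filter_intBox hlamN]
        simpa only [Fintype.card_fin] using
          hbox N (by omega) (fun i x ↦ ‖f i (y - x)‖) (fun i x ↦ norm_nonneg _) lam
    _ ≤ C * (2 * √lam) ^ (n - 2) * P := by
        gcongr
        exact natSqrt_add_one_le_two_mul_sqrt hlam
    _ = c * √lam ^ (n - 2) * (C * 2 ^ (n - 2) / c * P) := by
        rw [mul_pow]
        field_simp
    _ ≤ sphereCount n lam * (C * 2 ^ (n - 2) / c * P) := by
        gcongr
        exact hsphere lam

lemma ofReal_sqrt_inv_mul_sum_norm_sq {α E : Type*} [SeminormedAddCommGroup E] {N : ℕ} (hN : 1 ≤ N)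
    (s : Finset α) (g : α → E) : ENNReal.ofReal √((N : ℝ)⁻¹ * ∑ x ∈ s, ‖g x‖ ^ 2) =
      ((N : ℝ≥0∞)⁻¹ * ∑ x ∈ s, (‖g x‖₊ : ℝ≥0∞) ^ 2) ^ ((1 : ℝ) / 2) := by
  have hN0 : (0 : ℝ) < N := by exact_mod_cast hN
  rw [Real.sqrt_eq_rpow, ← ENNReal.ofReal_rpow_of_nonneg (by positivity) (by norm_num),
    ENNReal.ofReal_mul (by positivity), ENNReal.ofReal_inv_of_pos hN0, ENNReal.ofReal_natCast,
    ENNReal.ofReal_sum_of_nonneg fun _ _ ↦ by positivity]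
  simp only [ENNReal.ofReal_pow (norm_nonneg _), ofReal_norm, enorm_eq_nnnorm]

end SphericalAverage

/-- pointwise domination by Hardy–Littlewood maximal functions: for
`n ≥ 5` there is a constant `C = C(n)` such that
`A_*[f₁,…,f_n](y) ≤ C ∏_i (sup_{N ≥ 1} N⁻¹ ∑_{|x| ≤ N} |f_i(y - x)|²)^{1/2}`. -/
theorem statement14 (n : ℕ) (hn : 5 ≤ n) :
    ∃ C : ℝ≥0, ∀ f : Fin n → ℤ → ℂ, ∀ y : ℤ,
      maxFn n f y ≤ (C : ℝ≥0∞) *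
        ∏ i, (⨆ (N : ℕ) (_ : 1 ≤ N), (N : ℝ≥0∞)⁻¹ *
            ∑ x ∈ Finset.Icc (-(N : ℤ)) (N : ℤ), (‖f i (y - x)‖₊ : ℝ≥0∞) ^ 2) ^ ((1 : ℝ) / 2) := by
  obtain ⟨C, hC, hbound⟩ := SphericalAverage.exists_norm_mulAvg_le hn
  refine ⟨C.toNNReal, fun f y ↦ iSup₂_le fun lam hlam ↦ ?_⟩
  obtain ⟨N, hN, hmulAvg⟩ := hbound f y lam hlam
  rw [← enorm_eq_nnnorm, ← ofReal_norm]
  refine (ENNReal.ofReal_le_ofReal hmulAvg).trans ?_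
  rw [ENNReal.ofReal_mul hC, ENNReal.ofReal_prod_of_nonneg fun i _ ↦ Real.sqrt_nonneg _]
  refine mul_le_mul_right (Finset.prod_le_prod' fun i _ ↦ ?_) _
  rw [SphericalAverage.ofReal_sqrt_inv_mul_sum_norm_sq hN]
  gcongr
  exact le_iSup₂ (f := fun (N : ℕ) (_ : 1 ≤ N) ↦ (N : ℝ≥0∞)⁻¹ *
    ∑ x ∈ Finset.Icc (-(N : ℤ)) (N : ℤ), (‖f i (y - x)‖₊ : ℝ≥0∞) ^ 2) N hN
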